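/- arXiv:1801.07305 — 4 statements merged into one kernel-verified Lean document; each statement's English description precedes it below -/
import Mathlib

section
/- Let R ⊂ A be a Frobenius extension of rings. For every left A-module M, the Gorenstein projective dimension of M over R (via restriction of scalars) is at most the Gorenstein projective dimension of M over A: G-pd_R M ≤ G-pd_A M. -/
universe u

section Frobenius

variable {R A : Type u} [Ring R] [Ring A]

/-- A ring extension `ι : R →+* A` (an injective ring homomorphism) is a Frobenius extension
if there is an `R`-`R`-bimodule homomorphism `τ : A → R` together with dual bases
`x i`, `y i` in `A`. -/
def IsFrobeniusExtension (ι : R →+* A) : Prop :=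
  Function.Injective ι ∧
  ∃ (τ : A →+ R) (n : ℕ) (x y : Fin n → A),
    (∀ (r : R) (a : A), τ (ι r * a) = r * τ a) ∧
    (∀ (a : A) (r : R), τ (a * ι r) = τ a * r) ∧
    (∀ a : A, ∑ i, x i * ι (τ (y i * a)) = a) ∧
    (∀ a : A, ∑ i, ι (τ (a * x i)) * y i = a)

end Frobenius

/-- A left `R`-module `M` is Gorenstein projective if it is a syzygy of a totally acyclic
complex of projective modules: there is an acyclic complex `⋯ → P₁ → P₀ → P₋₁ → ⋯` of
projective `R`-modules which stays acyclic after applying `Hom_R(-, Q)` for every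
projective `R`-module `Q`, with `M ≅ ker (P₀ → P₋₁)`. -/
def IsGorensteinProjective (R : Type u) [Ring R] (M : ModuleCat.{u} R) : Prop :=
  ∃ (P : ℤ → ModuleCat.{u} R) (f : ∀ i : ℤ, P (i + 1) →ₗ[R] P i),
    (∀ i, Module.Projective R (P i)) ∧
    (∀ i, (f i).comp (f (i + 1)) = 0) ∧
    (∀ i, LinearMap.range (f (i + 1)) = LinearMap.ker (f i)) ∧
    (∀ Q : ModuleCat.{u} R, Module.Projective R Q →
      ∀ (i : ℤ) (g : P (i + 1) →ₗ[R] Q), g.comp (f (i + 1)) = 0 →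
        ∃ h : P i →ₗ[R] Q, h.comp (f i) = g) ∧
    Nonempty (↥M ≃ₗ[R] ↥(LinearMap.ker (f (-1))))

/-- `GPdimLE R n M` means that `M` admits a Gorenstein projective resolution of length `n`,
i.e. an exact sequence `0 → G_n → ⋯ → G₁ → G₀ → M → 0` with all `G_i` Gorenstein
projective. -/
def GPdimLE (R : Type u) [Ring R] : ℕ → ModuleCat.{u} R → Prop
  | 0, M => IsGorensteinProjective R M
  | n + 1, M => ∃ (G : ModuleCat.{u} R) (f : G →ₗ[R] M),
      Function.Surjective f ∧ IsGorensteinProjective R G ∧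
      GPdimLE R n (ModuleCat.of R ↥(LinearMap.ker f))

/-- The Gorenstein projective dimension of a left `R`-module, in `ℕ∞`. -/
noncomputable def GPdim (R : Type u) [Ring R] (M : ModuleCat.{u} R) : ℕ∞ :=
  sInf {k : ℕ∞ | ∃ n : ℕ, k = (n : ℕ∞) ∧ GPdimLE R n M}

/-!
A Frobenius system `(τ, x, y)` makes coinduction `Hom_R(A, -)`, which is always right adjoint to
restriction of scalars, left adjoint to it as well: the unit sends `n` to `a ↦ τ(a) n`, the counit
sends `g` to `∑ i, x i • g (y i)`.

Let `F ⊣ G ⊣ F` be functors between module categories. Both are exact and both preserve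
projectives, because each is left adjoint to a functor preserving epimorphisms. So `F` sends acyclic
complexes of projectives to acyclic complexes of projectives. As `Hom(F P, Q) ≅ Hom(P, G Q)` and
`G Q` is projective when `Q` is, total acyclicity is kept too. Hence `F` preserves Gorenstein
projective modules and carries resolutions by them to resolutions of the same length.
-/

open CategoryTheory CategoryTheory.Limits ModuleCat

section FrobeniusSystem

universe v w w'

variable {R : Type v} {A : Type w} [Ring R] [Ring A]

theorem coextendScalars_sum_apply {ι : R →+* A} {κ : Type*} {s : Finset κ}
    {N : ModuleCat.{max u w} R} (g : κ → (coextendScalars ι).obj N) (a : A) :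
    (∑ i ∈ s, g i) a = ∑ i ∈ s, g i a :=
  (congrArg (· a) (map_sum (CoextendScalars.equiv ι N) g s)).trans (LinearMap.sum_apply _ _ _)

/-- A Frobenius system for a ring homomorphism `ι : R →+* A`: an `R`-`R`-bimodule homomorphism
`trace : A → R` with dual bases `x` and `y`. It is the data in `IsFrobeniusExtension ι`, for an
arbitrary finite index type and without injectivity of `ι`. -/
structure FrobeniusSystem (ι : R →+* A) (κ : Type w') [Fintype κ] where
  trace : A →+ R
  x : κ → A
  y : κ → A
  trace_map_mul (r : R) (a : A) : trace (ι r * a) = r * trace a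
  trace_mul_map (a : A) (r : R) : trace (a * ι r) = trace a * r
  sum_x_mul_trace (a : A) : ∑ i, x i * ι (trace (y i * a)) = a
  sum_trace_mul_y (a : A) : ∑ i, ι (trace (a * x i)) * y i = a

namespace FrobeniusSystem

variable {ι : R →+* A} {κ : Type w'} [Fintype κ] (Φ : FrobeniusSystem ι κ)

theorem sum_x_mul_trace_mul_mul_x (a : A) (i : κ) :
    ∑ j, Φ.x j * ι (Φ.trace (Φ.y j * a * Φ.x i)) = a * Φ.x i := by
  simpa only [mul_assoc] using Φ.sum_x_mul_trace (a * Φ.x i)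

theorem sum_trace_smul_apply {N : ModuleCat.{max u w} R} (g : (coextendScalars ι).obj N) (a : A) :
    ∑ i, Φ.trace (a * Φ.x i) • g (Φ.y i) = g a :=
  calc ∑ i, Φ.trace (a * Φ.x i) • g (Φ.y i)
      = ∑ i, g (ι (Φ.trace (a * Φ.x i)) * Φ.y i) :=
        Finset.sum_congr rfl fun _ _ ↦ (map_smul (CoextendScalars.equiv ι N g) _ _).symm
    _ = g (∑ i, ι (Φ.trace (a * Φ.x i)) * Φ.y i) :=
        (map_sum (CoextendScalars.equiv ι N g) _ _).symm
    _ = g a := congrArg g (Φ.sum_trace_mul_y a)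

/-- The unit `n ↦ (a ↦ trace a • n)` of the adjunction between coextension and restriction. -/
noncomputable def unitApp (N : ModuleCat.{max u w} R) :
    N →ₗ[R] (restrictScalars ι).obj ((coextendScalars ι).obj N) where
  toFun n := (CoextendScalars.equiv ι N).symm
    { toFun (a : A) := Φ.trace a • n
      map_add' a b := (congrArg (· • n) (Φ.trace.map_add a b)).trans (add_smul _ _ _)
      map_smul' r a := (congrArg (· • n) (Φ.trace_map_mul r a)).trans (mul_smul _ _ _) }
  map_add' _ _ := CoextendScalars.ext <| LinearMap.ext fun _ ↦ smul_add _ _ _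
  map_smul' r n := CoextendScalars.ext <| LinearMap.ext fun (a : A) ↦
    (mul_smul _ _ _).symm.trans (congrArg (· • n) (Φ.trace_mul_map a r).symm)

theorem sum_x_smul_apply_mul {M : ModuleCat.{max u w} A}
    (g : (coextendScalars ι).obj ((restrictScalars ι).obj M)) (a : A) :
    ∑ i, Φ.x i • (g (Φ.y i * a) : M) = a • ∑ i, Φ.x i • (g (Φ.y i) : M) := by
  have hg (i : κ) :
      (g (Φ.y i * a) : M) = ∑ j, ι (Φ.trace (Φ.y i * a * Φ.x j)) • (g (Φ.y j) : M) :=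
    (Φ.sum_trace_smul_apply g (Φ.y i * a)).symm
  calc ∑ i, Φ.x i • (g (Φ.y i * a) : M)
      = ∑ i, ∑ j, Φ.x i • ι (Φ.trace (Φ.y i * a * Φ.x j)) • (g (Φ.y j) : M) := by
        simp only [hg, Finset.smul_sum]
    _ = ∑ j, ∑ i, Φ.x i • ι (Φ.trace (Φ.y i * a * Φ.x j)) • (g (Φ.y j) : M) :=
        Finset.sum_comm
    _ = a • ∑ j, Φ.x j • (g (Φ.y j) : M) := by
        simp only [smul_smul, ← Finset.sum_smul, Φ.sum_x_mul_trace_mul_mul_x, Finset.smul_sum]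

/-- The counit `g ↦ ∑ i, x i • g (y i)` of the adjunction between coextension and restriction. -/
noncomputable def counitApp (M : ModuleCat.{max u w} A) :
    (coextendScalars ι).obj ((restrictScalars ι).obj M) →ₗ[A] M where
  toFun g := ∑ i, Φ.x i • (g (Φ.y i) : M)
  map_add' g g' :=
    (Finset.sum_congr rfl fun i _ ↦ smul_add (Φ.x i) (g (Φ.y i) : M) (g' (Φ.y i) : M)).trans
      Finset.sum_add_distrib
  map_smul' a g := Φ.sum_x_smul_apply_mul g a

theorem counitApp_map_unitApp {N : ModuleCat.{max u w} R} (g : (coextendScalars ι).obj N) :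
    Φ.counitApp ((coextendScalars ι).obj N)
      ((coextendScalars ι).map (ofHom (Φ.unitApp N)) g) = g := by
  refine CoextendScalars.ext <| LinearMap.ext fun (a : A) ↦ ?_
  calc CoextendScalars.equiv ι N (∑ i, Φ.x i • Φ.unitApp N (g (Φ.y i))) a
      = ∑ i, CoextendScalars.equiv ι N (Φ.x i • Φ.unitApp N (g (Φ.y i))) a :=
        coextendScalars_sum_apply _ a
    _ = g a := Φ.sum_trace_smul_apply g a

theorem counitApp_unitApp {M : ModuleCat.{max u w} A} (m : M) :
    Φ.counitApp M (Φ.unitApp ((restrictScalars ι).obj M) m) = m :=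
  calc ∑ i, Φ.x i • ι (Φ.trace (Φ.y i)) • m
      = (∑ i, Φ.x i * ι (Φ.trace (Φ.y i * 1))) • m := by
        simp only [smul_smul, Finset.sum_smul, mul_one]
    _ = m := by rw [Φ.sum_x_mul_trace, one_smul]

/-- A Frobenius system makes coextension of scalars left adjoint to restriction of scalars; it is
right adjoint to it by `ModuleCat.restrictCoextendScalarsAdj`. -/
noncomputable def coextendRestrictScalarsAdj :
    coextendScalars.{v, w, max u w} ι ⊣ restrictScalars ι :=
  Adjunction.mkOfUnitCounit
    { unit :=
        { app N := ofHom (Y := (restrictScalars ι).obj ((coextendScalars ι).obj N)) (Φ.unitApp N)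
          naturality N N' f := by
            ext n
            exact CoextendScalars.ext <| LinearMap.ext fun (a : A) ↦
              (map_smul f.hom (Φ.trace a) n).symm }
      counit :=
        { app M := ofHom (Φ.counitApp M)
          naturality M M' f := by
            ext g
            exact ((map_sum f.hom _ _).trans
              (Finset.sum_congr rfl fun i _ ↦ map_smul f.hom _ _)).symm }
      left_triangle := by
        ext N g
        exact Φ.counitApp_map_unitApp g
      right_triangle := by
        ext M m
        exact Φ.counitApp_unitApp m }

end FrobeniusSystem

end FrobeniusSystem

theorem exists_map_comp_eq_of_adjunction {C D : Type*} [Category C] [Category D]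
    [HasZeroMorphisms C] [HasZeroMorphisms D] {F : C ⥤ D} {G : D ⥤ C} (adj : F ⊣ G)
    [G.PreservesZeroMorphisms] {X Y Z : C} {Q : D} {d : X ⟶ Y} {d' : Y ⟶ Z}
    (hlift : ∀ k : Y ⟶ G.obj Q, d ≫ k = 0 → ∃ h : Z ⟶ G.obj Q, d' ≫ h = k)
    (g : F.obj Y ⟶ Q) (hg : F.map d ≫ g = 0) : ∃ h : F.obj Z ⟶ Q, F.map d' ≫ h = g := by
  have hzero : d ≫ adj.homEquiv Y Q g = 0 := by
    rw [← adj.homEquiv_naturality_left, hg, adj.homEquiv_unit, G.map_zero, comp_zero]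
  obtain ⟨h, hh⟩ := hlift _ hzero
  exact ⟨(adj.homEquiv Z Q).symm h, by
    rw [← adj.homEquiv_naturality_left_symm, hh, Equiv.symm_apply_apply]⟩

section ModuleFunctor

universe v w

variable {R S : Type*} [Ring R] [Ring S] (F : ModuleCat.{v} S ⥤ ModuleCat.{w} R)

theorem range_map_eq_ker_map [F.PreservesZeroMorphisms] [F.PreservesHomology]
    {X Y Z : ModuleCat.{v} S} (f : X ⟶ Y) (g : Y ⟶ Z) (hfg : f.hom.range = g.hom.ker) :
    (F.map f).hom.range = (F.map g).hom.ker :=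
  ((ShortComplex.Exact.moduleCat_of_range_eq_ker f g hfg).map F).moduleCat_range_eq_ker

/-- The isomorphism `F (ker f) ≅ ker (F f)` for a functor that preserves the kernel of `f`, with
kernels as submodules. -/
noncomputable def mapKerIso [F.PreservesZeroMorphisms] {M N : ModuleCat.{v} S} (f : M ⟶ N)
    [PreservesLimit (parallelPair f 0) F] :
    F.obj (of S f.hom.ker) ≅ of R (F.map f).hom.ker :=
  F.mapIso (kernelIsoKer f).symm ≪≫ PreservesKernel.iso F f ≪≫ kernelIsoKer (F.map f)

theorem moduleProjective_obj [Small.{v} S] [Small.{w} R] [F.PreservesProjectiveObjects]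
    {M : ModuleCat.{v} S} (hM : Module.Projective S M) : Module.Projective R (F.obj M) := by
  rw [IsProjective.iff_projective] at hM ⊢
  exact F.projective_obj_of_projective hM

end ModuleFunctor

section GorensteinProjective

variable {R S : Type u} [Ring R] [Ring S]

theorem IsGorensteinProjective.of_iso {M N : ModuleCat.{u} R} (e : M ≅ N)
    (hM : IsGorensteinProjective R M) : IsGorensteinProjective R N := by
  obtain ⟨P, f, hP, hcomp, hexact, hlift, ⟨φ⟩⟩ := hM
  exact ⟨P, f, hP, hcomp, hexact, hlift, ⟨e.toLinearEquiv.symm.trans φ⟩⟩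

theorem GPdimLE.of_iso {M N : ModuleCat.{u} R} (e : M ≅ N) {n : ℕ} (hM : GPdimLE R n M) :
    GPdimLE R n N := by
  cases n with
  | zero => exact IsGorensteinProjective.of_iso e hM
  | succ n =>
    obtain ⟨G, f, hf, hG, hker⟩ := hM
    refine ⟨G, e.toLinearEquiv.toLinearMap ∘ₗ f, e.toLinearEquiv.surjective.comp hf, hG, ?_⟩
    rwa [LinearEquiv.ker_comp]

variable {F : ModuleCat.{u} S ⥤ ModuleCat.{u} R} {G : ModuleCat.{u} R ⥤ ModuleCat.{u} S}

theorem IsGorensteinProjective.map (adj : F ⊣ G) [PreservesFiniteLimits F]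
    [F.PreservesProjectiveObjects] [G.PreservesProjectiveObjects]
    {M : ModuleCat.{u} S} (hM : IsGorensteinProjective S M) :
    IsGorensteinProjective R (F.obj M) := by
  have := adj.isLeftAdjoint
  have := adj.isRightAdjoint
  have : PreservesColimits F := adj.leftAdjoint_preservesColimits
  have := F.preservesHomologyOfExact
  obtain ⟨P, f, hP, -, hexact, hlift, ⟨φ⟩⟩ := hM
  have hexactF (i : ℤ) :
      (F.map (ofHom (f (i + 1)))).hom.range = (F.map (ofHom (f i))).hom.ker :=
    range_map_eq_ker_map F _ _ (hexact i)
  refine ⟨fun i ↦ F.obj (P i), fun i ↦ (F.map (ofHom (f i))).hom,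
    fun i ↦ moduleProjective_obj F (hP i),
    fun i ↦ LinearMap.range_le_ker_iff.mp (hexactF i).le, hexactF, fun Q hQ i g hg ↦ ?_,
    ⟨(F.mapIso φ.toModuleIso ≪≫ mapKerIso F (ofHom (f (-1)))).toLinearEquiv⟩⟩
  have hliftG (k : P (i + 1) ⟶ G.obj Q) (hk : ofHom (f (i + 1)) ≫ k = 0) :
      ∃ h : P i ⟶ G.obj Q, ofHom (f i) ≫ h = k := by
    obtain ⟨h, hh⟩ := hlift (G.obj Q) (moduleProjective_obj G hQ) i k.hom (congrArg Hom.hom hk)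
    exact ⟨ofHom h, hom_ext hh⟩
  obtain ⟨h, hh⟩ := exists_map_comp_eq_of_adjunction adj hliftG (ofHom g) (hom_ext hg)
  exact ⟨h.hom, congrArg Hom.hom hh⟩

theorem GPdimLE.map (adj : F ⊣ G) [PreservesFiniteLimits F]
    [F.PreservesProjectiveObjects] [G.PreservesProjectiveObjects]
    {n : ℕ} {M : ModuleCat.{u} S} (hM : GPdimLE S n M) : GPdimLE R n (F.obj M) := by
  have := adj.isLeftAdjoint
  induction n generalizing M with
  | zero => exact IsGorensteinProjective.map adj hM
  | succ n ih =>
    obtain ⟨N, f, hf, hN, hker⟩ := hM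
    have : Epi (ofHom f) := (ModuleCat.epi_iff_surjective _).mpr hf
    exact ⟨F.obj N, (F.map (ofHom f)).hom, (ModuleCat.epi_iff_surjective _).mp inferInstance,
      hN.map adj, (ih hker).of_iso (mapKerIso F (ofHom f))⟩

theorem stmt12_general (adj : F ⊣ G) (adj' : G ⊣ F) (M : ModuleCat.{u} S) :
    GPdim R (F.obj M) ≤ GPdim S M := by
  have := adj.isLeftAdjoint
  have := adj'.isLeftAdjoint
  have : PreservesLimits F := adj'.rightAdjoint_preservesLimits
  have := F.preservesProjectiveObjects_of_adjunction_of_preservesEpimorphisms adj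
  have := G.preservesProjectiveObjects_of_adjunction_of_preservesEpimorphisms adj'
  refine le_sInf ?_
  rintro _ ⟨n, rfl, hn⟩
  exact sInf_le ⟨n, rfl, hn.map adj⟩

end GorensteinProjective

section Statement

variable {R A : Type u} [Ring R] [Ring A]

theorem stmt12 (ι : R →+* A) (hF : IsFrobeniusExtension ι)
    (M : Type u) [AddCommGroup M] [Module A M] :
    GPdim R (@ModuleCat.of R _ M _ (Module.compHom M ι)) ≤ GPdim A (ModuleCat.of A M) := by
  obtain ⟨-, τ, n, x, y, hl, hr, hx, hy⟩ := hF
  exact stmt12_general (restrictCoextendScalarsAdj.{u} ι)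
    (FrobeniusSystem.coextendRestrictScalarsAdj.{u} ⟨τ, x, y, hl, hr, hx, hy⟩) (of A M)

end Statement
end

section
/- Let R ⊂ A be a Frobenius extension of rings and let Q be a projective left R-module. Then Hom_R(A, Q) is isomorphic to A ⊗_R Q as left A-modules, and both are projective left A-modules. -/
/-!
The functor `A ⊗_R -` is left adjoint to the exact functor of restriction of scalars, so it
preserves projectives. A Frobenius system `(τ, x, y)` gives the `A`-linear map
`A ⊗_R Q → Hom_R(A, Q)`, `a ⊗ q ↦ (b ↦ τ (b a) q)`, and the two dual basis identities say exactly
that `f ↦ ∑ i, x i ⊗ f (y i)` is a left and a right inverse of it.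
-/

universe u

section Frobenius

variable {R A : Type u} [Ring R] [Ring A]

/-- The extension of scalars `A ⊗_R N` of a left `R`-module `N` along `ι : R →+* A`,
realized as the quotient of the free left `A`-module on `N` by the bilinearity and
balancing relations.  It is a left `A`-module. -/
abbrev ExtendedTensor (ι : R →+* A) (N : Type u) [AddCommGroup N] [Module R N] : Type u :=
  (N →₀ A) ⧸ Submodule.span A
    ({x : N →₀ A | ∃ n n' : N,
        x = Finsupp.single (n + n') 1 - Finsupp.single n 1 - Finsupp.single n' 1} ∪
     {x : N →₀ A | ∃ (r : R) (n : N),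
        x = Finsupp.single (r • n) 1 - Finsupp.single n (ι r)})

/-- The coinduced module `Hom_R(A, N)` of a left `R`-module `N` along `ι : R →+* A`,
where `A` is a left `R`-module via `ι`.  It is a left `A`-module via `(a • f) b = f (b * a)`. -/
abbrev CoinducedModule (ι : R →+* A) (N : Type u) [AddCommGroup N] [Module R N] : Type u :=
  @LinearMap R R _ _ (RingHom.id R) A N _ _ (Module.compHom A ι) _

noncomputable instance CoinducedModule.instModule (ι : R →+* A) (N : Type u)
    [AddCommGroup N] [Module R N] : Module A (CoinducedModule ι N) :=
  letI : Module R A := Module.compHom A ι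
  { smul := fun a f =>
      { toFun := fun b => f (b * a)
        map_add' := fun b c => by
          show f ((b + c) * a) = f (b * a) + f (c * a)
          rw [add_mul]; exact map_add f _ _
        map_smul' := fun r b => by
          show f (ι r * b * a) = r • f (b * a)
          rw [mul_assoc]
          exact map_smul f r (b * a) }
    one_smul := fun f => LinearMap.ext fun b => by show f (b * 1) = f b; rw [mul_one]
    mul_smul := fun a a' f => LinearMap.ext fun b => by
      show f (b * (a * a')) = f (b * a * a')
      rw [mul_assoc]
    smul_zero := fun a => LinearMap.ext fun b => rfl
    smul_add := fun a f g => LinearMap.ext fun b => rfl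
    add_smul := fun a a' f => LinearMap.ext fun b => by
      show f (b * (a + a')) = f (b * a) + f (b * a')
      rw [mul_add, map_add]
    zero_smul := fun f => LinearMap.ext fun b => by show f (b * 0) = 0; rw [mul_zero, map_zero] }

end Frobenius

theorem exists_semilinearMap_comp_eq_of_projective {R A Q M N : Type*} [Ring R] [Ring A]
    [AddCommGroup Q] [Module R Q] [Module.Projective R Q] [AddCommGroup M] [Module A M]
    [AddCommGroup N] [Module A N] {σ : R →+* A} (f : M →ₗ[A] N) (g : Q →ₛₗ[σ] N)
    (hf : Function.Surjective f) : ∃ h : Q →ₛₗ[σ] M, f.comp h = g := by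
  let _ : Module R M := Module.compHom M σ
  let _ : Module R N := Module.compHom N σ
  let fR : M →ₗ[R] N := { f with map_smul' := fun r => f.map_smul (σ r) }
  let gR : Q →ₗ[R] N := { g with map_smul' := g.map_smulₛₗ }
  obtain ⟨h, hfg⟩ := Module.projective_lifting_property fR gR hf
  exact ⟨{ h with map_smul' := h.map_smul }, LinearMap.ext fun q => LinearMap.congr_fun hfg q⟩

section ChangeOfRings

variable {R A : Type u} [Ring R] [Ring A] {ι : R →+* A}
variable {Q : Type u} [AddCommGroup Q] [Module R Q]

namespace ExtendedTensor

variable (ι Q) in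
/-- The unit `q ↦ 1 ⊗ q` of the extension of scalars, as a map semilinear along `ι`. -/
noncomputable def oneTMul : Q →ₛₗ[ι] ExtendedTensor ι Q where
  toFun q := Submodule.Quotient.mk (Finsupp.single q 1)
  map_add' q q' := by
    rw [← Submodule.Quotient.mk_add, Submodule.Quotient.eq]
    exact Submodule.subset_span (.inl ⟨q, q', sub_add_eq_sub_sub _ _ _⟩)
  map_smul' r q := by
    rw [← Submodule.Quotient.mk_smul, Submodule.Quotient.eq]
    exact Submodule.subset_span (.inr ⟨r, q, by rw [Finsupp.smul_single_one]⟩)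

theorem quotientMk_single (q : Q) (a : A) :
    (Submodule.Quotient.mk (Finsupp.single q a) : ExtendedTensor ι Q) = a • oneTMul ι Q q := by
  rw [← Finsupp.smul_single_one, Submodule.Quotient.mk_smul]
  rfl

@[elab_as_elim]
theorem induction_on {p : ExtendedTensor ι Q → Prop} (t : ExtendedTensor ι Q) (zero : p 0)
    (smul_oneTMul : ∀ (a : A) (q : Q), p (a • oneTMul ι Q q))
    (add : ∀ s t, p s → p t → p (s + t)) : p t := by
  obtain ⟨z, rfl⟩ := Submodule.Quotient.mk_surjective _ t
  induction z using Finsupp.induction_linear with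
  | zero => exact zero
  | add z w hz hw => exact add _ _ hz hw
  | single q a => exact quotientMk_single (ι := ι) q a ▸ smul_oneTMul a q

variable {M : Type*} [AddCommGroup M] [Module A M]

theorem linearMap_ext {f g : ExtendedTensor ι Q →ₗ[A] M}
    (h : ∀ q, f (oneTMul ι Q q) = g (oneTMul ι Q q)) : f = g := by
  ext q
  exact h q

/-- The `A`-linear map `a ⊗ q ↦ a • h q` on the extension of scalars induced by a map `h` semilinear
along `ι`; semilinearity stands for `R`-linearity into the restriction of scalars of `M`. -/
noncomputable def lift (h : Q →ₛₗ[ι] M) : ExtendedTensor ι Q →ₗ[A] M :=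
  Submodule.liftQ _ (Finsupp.linearCombination A h) <| by
    rw [Submodule.span_le]
    rintro z (⟨q, q', rfl⟩ | ⟨r, q, rfl⟩) <;> simp

theorem lift_oneTMul (h : Q →ₛₗ[ι] M) (q : Q) : lift h (oneTMul ι Q q) = h q :=
  (Finsupp.linearCombination_single A 1 q).trans (one_smul A (h q))

instance projective [Module.Projective R Q] : Module.Projective A (ExtendedTensor ι Q) := by
  refine .of_lifting_property'' fun f hf => ?_
  obtain ⟨h, hfh⟩ := exists_semilinearMap_comp_eq_of_projective f (oneTMul ι Q) hf
  refine ⟨lift h, linearMap_ext fun q => ?_⟩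
  rw [LinearMap.comp_apply, lift_oneTMul]
  exact LinearMap.congr_fun hfh q

end ExtendedTensor

namespace CoinducedModule

protected theorem ext {f g : CoinducedModule ι Q} (h : ∀ b, f b = g b) : f = g :=
  letI : Module R A := Module.compHom A ι
  LinearMap.ext h

theorem smul_apply (a : A) (f : CoinducedModule ι Q) (b : A) : (a • f) b = f (b * a) :=
  rfl

theorem apply_mul (f : CoinducedModule ι Q) (r : R) (b : A) : f (ι r * b) = r • f b :=
  letI : Module R A := Module.compHom A ι
  f.map_smul r b

end CoinducedModule

/-- A Frobenius system for a ring homomorphism `ι : R →+* A`: an `R`-`R`-bimodule homomorphism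
`τ : A → R` with dual bases `x`, `y`. A Frobenius extension is an injective `ι` that has one; the
bases are indexed by an arbitrary finite type. -/
structure FrobeniusSystem_s13 {R A : Type*} [Ring R] [Ring A] (ι : R →+* A) (κ : Type*)
    [Fintype κ] where
  τ : A →+ R
  x : κ → A
  y : κ → A
  τ_mul_left (r : R) (a : A) : τ (ι r * a) = r * τ a
  τ_mul_right (a : A) (r : R) : τ (a * ι r) = τ a * r
  sum_mul_τ (a : A) : ∑ i, x i * ι (τ (y i * a)) = a
  sum_τ_mul (a : A) : ∑ i, ι (τ (a * x i)) * y i = a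

theorem IsFrobeniusExtension.exists_frobeniusSystem (h : IsFrobeniusExtension ι) :
    ∃ n : ℕ, Nonempty (FrobeniusSystem_s13 ι (Fin n)) := by
  obtain ⟨-, τ, n, x, y, hl, hr, hx, hy⟩ := h
  exact ⟨n, ⟨⟨τ, x, y, hl, hr, hx, hy⟩⟩⟩

namespace FrobeniusSystem_s13

open ExtendedTensor

variable {κ : Type*} [Fintype κ] (S : FrobeniusSystem_s13 ι κ)

variable (Q) in
/-- The map `q ↦ (b ↦ τ b • q)` from `Q` to `Hom_R(A, Q)`, semilinear along `ι`. -/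
def smulRight : Q →ₛₗ[ι] CoinducedModule ι Q :=
  letI : Module R A := Module.compHom A ι
  { toFun q :=
      { toFun b := S.τ b • q
        map_add' b c := by rw [map_add, add_smul]
        map_smul' r b := by
          change S.τ (ι r * b) • q = r • S.τ b • q
          rw [S.τ_mul_left, mul_smul] }
    map_add' q q' := CoinducedModule.ext fun b => smul_add (S.τ b) q q'
    map_smul' r q := CoinducedModule.ext fun b => by
      change S.τ b • r • q = S.τ (b * ι r) • q
      rw [S.τ_mul_right, mul_smul] }

theorem smulRight_apply (q : Q) (b : A) : S.smulRight Q q b = S.τ b • q :=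
  rfl

variable (Q) in
/-- The `A`-linear map `a ⊗ q ↦ (b ↦ τ (b * a) • q)` from `A ⊗_R Q` to `Hom_R(A, Q)`. -/
noncomputable def toCoinduced : ExtendedTensor ι Q →ₗ[A] CoinducedModule ι Q :=
  lift (S.smulRight Q)

theorem toCoinduced_smul_oneTMul_apply (a : A) (q : Q) (b : A) :
    S.toCoinduced Q (a • oneTMul ι Q q) b = S.τ (b * a) • q := by
  rw [map_smul, CoinducedModule.smul_apply, toCoinduced, lift_oneTMul, smulRight_apply]

theorem sum_smul_oneTMul_toCoinduced (t : ExtendedTensor ι Q) :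
    ∑ i, S.x i • oneTMul ι Q (S.toCoinduced Q t (S.y i)) = t := by
  induction t using induction_on with
  | zero => simp only [map_zero, LinearMap.zero_apply, smul_zero, Finset.sum_const_zero]
  | smul_oneTMul a q =>
    calc ∑ i, S.x i • oneTMul ι Q (S.toCoinduced Q (a • oneTMul ι Q q) (S.y i))
        = ∑ i, (S.x i * ι (S.τ (S.y i * a))) • oneTMul ι Q q :=
          Finset.sum_congr rfl fun i _ => by
            rw [toCoinduced_smul_oneTMul_apply, LinearMap.map_smulₛₗ, mul_smul]
      _ = a • oneTMul ι Q q := by rw [← Finset.sum_smul, S.sum_mul_τ]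
  | add s t hs ht =>
    simp only [map_add, LinearMap.add_apply, smul_add, Finset.sum_add_distrib, hs, ht]

theorem toCoinduced_sum_smul_oneTMul (f : CoinducedModule ι Q) :
    S.toCoinduced Q (∑ i, S.x i • oneTMul ι Q (f (S.y i))) = f := by
  refine CoinducedModule.ext fun b => ?_
  calc S.toCoinduced Q (∑ i, S.x i • oneTMul ι Q (f (S.y i))) b
      = ∑ i, S.τ (b * S.x i) • f (S.y i) := by
        simp only [map_sum, LinearMap.sum_apply, toCoinduced_smul_oneTMul_apply]
    _ = f (∑ i, ι (S.τ (b * S.x i)) * S.y i) := by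
        simp only [map_sum, CoinducedModule.apply_mul]
    _ = f b := by rw [S.sum_τ_mul]

variable (Q) in
/-- The isomorphism `A ⊗_R Q ≃ Hom_R(A, Q)` of induction with coinduction, with inverse
`f ↦ ∑ i, x i ⊗ f (y i)`. -/
noncomputable def extendedEquivCoinduced : ExtendedTensor ι Q ≃ₗ[A] CoinducedModule ι Q where
  __ := S.toCoinduced Q
  invFun f := ∑ i, S.x i • oneTMul ι Q (f (S.y i))
  left_inv := S.sum_smul_oneTMul_toCoinduced
  right_inv := S.toCoinduced_sum_smul_oneTMul

end FrobeniusSystem_s13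

theorem stmt13_general {κ : Type*} [Fintype κ] (S : FrobeniusSystem_s13 ι κ)
    (Q : Type u) [AddCommGroup Q] [Module R Q] [Module.Projective R Q] :
    Nonempty (CoinducedModule ι Q ≃ₗ[A] ExtendedTensor ι Q) ∧
      Module.Projective A (CoinducedModule ι Q) ∧
      Module.Projective A (ExtendedTensor ι Q) :=
  ⟨⟨(S.extendedEquivCoinduced Q).symm⟩, .of_equiv (S.extendedEquivCoinduced Q), inferInstance⟩

end ChangeOfRings

section Statement

variable {R A : Type u} [Ring R] [Ring A]

theorem stmt13 (ι : R →+* A) (hF : IsFrobeniusExtension ι)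
    (Q : Type u) [AddCommGroup Q] [Module R Q] (hQ : Module.Projective R Q) :
    Nonempty (CoinducedModule ι Q ≃ₗ[A] ExtendedTensor ι Q) ∧
      Module.Projective A (CoinducedModule ι Q) ∧
      Module.Projective A (ExtendedTensor ι Q) := by
  obtain ⟨n, ⟨S⟩⟩ := hF.exists_frobeniusSystem
  exact stmt13_general S Q

end Statement
end

section
/- Let R ⊂ A be a Frobenius extension of rings and let M be a left A-module whose underlying left R-module is Gorenstein projective. Then Ext^i_A(M, P) = 0 for every projective left A-module P and every integer i ≥ 1. -/
universe u

/-- An (augmented) projective resolution `⋯ → P₁ → P₀ → M → 0` of a left `R`-module `M`. -/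
structure ProjectiveRes (R : Type u) [Ring R] (M : ModuleCat.{u} R) where
  P : ℕ → ModuleCat.{u} R
  d : ∀ i : ℕ, P (i + 1) →ₗ[R] P i
  ε : P 0 →ₗ[R] M
  projective : ∀ i, Module.Projective R (P i)
  surj : Function.Surjective ε
  exact_zero : LinearMap.range (d 0) = LinearMap.ker ε
  exact_succ : ∀ i, LinearMap.range (d (i + 1)) = LinearMap.ker (d i)

/-- `ExtSuccVanishes R M N j` expresses that `Ext^{j+1}_R(M, N) = 0`: for every projective
resolution `P_•` of `M`, the complex `Hom_R(P_•, N)` is exact at the spot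
`Hom_R(P_{j+1}, N)`. -/
def ExtSuccVanishes (R : Type u) [Ring R] (M N : ModuleCat.{u} R) (j : ℕ) : Prop :=
  ∀ res : ProjectiveRes R M, ∀ g : res.P (j + 1) →ₗ[R] N,
    g.comp (res.d (j + 1)) = 0 → ∃ h : res.P j →ₗ[R] N, h.comp (res.d j) = g

section Statement

variable {R A : Type u} [Ring R] [Ring A]

/-!
By dimension shifting, the cohomology of `Hom_R(P_•, N)` in positive degrees does not depend on the
projective resolution `P_•` of `M`: it vanishes exactly when `Ext` does. Half of a totally acyclic
complex is a projective resolution of a Gorenstein projective module that stays exact under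
`Hom_R(-, Q)` for `Q` projective, so the `Ext` groups over `R` vanish.

To pass from `R` to `A`, send an `R`-linear map `φ` between `A`-modules to its trace
`v ↦ ∑ i, x i • φ (y i • v)`, which is `A`-linear by the dual basis identities. The trace is
compatible with composition by `A`-linear maps, and on a projective `A`-module `P` the identity is
the trace of some `R`-linear `θ`. An `A`-linear cocycle `g` with values in `P` then becomes the
`R`-linear cocycle `θ ∘ g`; if `θ ∘ g` is the coboundary of `h`, then `g` is the coboundary of the
trace of `h`.
-/

open CategoryTheory Abelian

section DimensionShifting

universe v w t

variable {C : Type w} [Category.{v} C] [Abelian C] [HasExt.{t} C] {S : ShortComplex C}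

theorem subsingleton_ext_one_iff_of_shortExact (hS : S.ShortExact) [Projective S.X₂] (Y : C) :
    Subsingleton (Ext.{t} S.X₃ Y 1) ↔ ∀ g : S.X₁ ⟶ Y, ∃ h : S.X₂ ⟶ Y, S.f ≫ h = g := by
  constructor
  · intro _ g
    obtain ⟨e, he⟩ := Ext.contravariant_sequence_exact₁ hS Y (Ext.mk₀ g) (add_zero 1)
      (Subsingleton.elim _ _)
    obtain ⟨h, rfl⟩ := (Ext.mk₀_bijective _ _).2 e
    rw [Ext.mk₀_comp_mk₀] at he
    exact ⟨h, (Ext.mk₀_bijective _ _).1 he⟩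
  · refine fun extend => subsingleton_of_forall_eq 0 fun e => ?_
    obtain ⟨e', rfl⟩ := Ext.contravariant_sequence_exact₃ hS Y e (Ext.eq_zero_of_projective _)
      (add_zero 1)
    obtain ⟨g, rfl⟩ := (Ext.mk₀_bijective _ _).2 e'
    obtain ⟨h, rfl⟩ := extend g
    rw [← Ext.mk₀_comp_mk₀]
    exact hS.extClass_comp_assoc _

theorem subsingleton_ext_add_two_iff_of_shortExact (hS : S.ShortExact) [Projective S.X₂] (Y : C)
    (n : ℕ) : Subsingleton (Ext.{t} S.X₃ Y (n + 2)) ↔ Subsingleton (Ext.{t} S.X₁ Y (n + 1)) := by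
  have hn : 1 + (n + 1) = n + 2 := by lia
  constructor
  · refine fun _ => subsingleton_of_forall_eq 0 fun e => ?_
    obtain ⟨e', rfl⟩ := Ext.contravariant_sequence_exact₁ hS Y e hn (Subsingleton.elim _ _)
    rw [Ext.eq_zero_of_projective e', Ext.comp_zero]
  · refine fun _ => subsingleton_of_forall_eq 0 fun e => ?_
    obtain ⟨e', rfl⟩ := Ext.contravariant_sequence_exact₃ hS Y e (Ext.eq_zero_of_projective _) hn
    rw [Subsingleton.elim e' 0, Ext.comp_zero]

end DimensionShifting

namespace ProjectiveRes

variable {M : ModuleCat.{u} R}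

/-- Exactness of the complex `Hom_R(P_•, N)` at `Hom_R(P_{j+1}, N)` for one resolution `P_•`;
`ExtSuccVanishes` asks for it for all resolutions. The shift by one follows `ExtSuccVanishes`. -/
def IsHomExactAt (res : ProjectiveRes R M) (N : ModuleCat.{u} R) (j : ℕ) : Prop :=
  ∀ g : res.P (j + 1) →ₗ[R] N, g ∘ₗ res.d (j + 1) = 0 → ∃ h : res.P j →ₗ[R] N, h ∘ₗ res.d j = g

/-- The truncated resolution `⋯ → P₂ → P₁ → Ker(P₀ → M) → 0` of the first syzygy of `M`. -/
def syzygy (res : ProjectiveRes R M) : ProjectiveRes R (ModuleCat.of R (LinearMap.ker res.ε)) where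
  P i := res.P (i + 1)
  d i := res.d (i + 1)
  ε := (res.d 0).codRestrict _ fun v => res.exact_zero ▸ LinearMap.mem_range_self _ v
  projective i := res.projective (i + 1)
  surj := by
    rintro ⟨v, hv⟩
    obtain ⟨u, rfl⟩ := res.exact_zero ▸ hv
    exact ⟨u, rfl⟩
  exact_zero := (res.exact_succ 0).trans (LinearMap.ker_codRestrict _ _ _).symm
  exact_succ i := res.exact_succ (i + 1)

theorem isHomExactAt_zero_iff (res : ProjectiveRes R M) (N : ModuleCat.{u} R) :
    res.IsHomExactAt N 0 ↔ ∀ g : LinearMap.ker res.ε →ₗ[R] N,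
      ∃ h : res.P 0 →ₗ[R] N, h ∘ₗ (LinearMap.ker res.ε).subtype = g := by
  let π : res.P 1 →ₗ[R] LinearMap.ker res.ε := res.syzygy.ε
  have hπ : Function.Surjective π := res.syzygy.surj
  have hker : LinearMap.range (res.d 1) = LinearMap.ker π := res.syzygy.exact_zero
  constructor
  · intro hexact g
    obtain ⟨h, hh⟩ := hexact (g ∘ₗ π) <| by
      rw [LinearMap.comp_assoc, LinearMap.range_le_ker_iff.mp hker.le, LinearMap.comp_zero]
    exact ⟨h, (LinearMap.cancel_right hπ).mp hh⟩
  · intro extend g hg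
    have hπg : LinearMap.ker π ≤ LinearMap.ker g := hker ▸ LinearMap.range_le_ker_iff.mpr hg
    obtain ⟨h, hh⟩ := extend
      ((LinearMap.ker π).liftQ g hπg ∘ₗ (π.quotKerEquivOfSurjective hπ).symm.toLinearMap)
    refine ⟨h, LinearMap.ext fun v => ?_⟩
    have hv : (π.quotKerEquivOfSurjective hπ).symm (π v) = (LinearMap.ker π).mkQ v :=
      (LinearEquiv.symm_apply_eq _).mpr rfl
    calc h (res.d 0 v) = (LinearMap.ker π).liftQ g hπg
            ((π.quotKerEquivOfSurjective hπ).symm (π v)) := LinearMap.congr_fun hh (π v)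
      _ = g v := by rw [hv, Submodule.mkQ_apply, Submodule.liftQ_apply]

theorem subsingleton_ext_one_iff (res : ProjectiveRes R M) (N : ModuleCat.{u} R) :
    Subsingleton (Ext M N 1) ↔ ∀ g : LinearMap.ker res.ε →ₗ[R] N,
      ∃ h : res.P 0 →ₗ[R] N, h ∘ₗ (LinearMap.ker res.ε).subtype = g := by
  have hS := LinearMap.shortExact_shortComplexKer res.surj
  have : Projective (ModuleCat.of R (res.P 0)) :=
    (IsProjective.iff_projective _).mp (res.projective 0)
  refine (subsingleton_ext_one_iff_of_shortExact hS N).trans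
    ⟨fun extend g => ?_, fun extend g => ?_⟩
  · obtain ⟨h, hh⟩ := extend (ModuleCat.ofHom g)
    exact ⟨h.hom, congrArg ModuleCat.Hom.hom hh⟩
  · obtain ⟨h, hh⟩ := extend g.hom
    exact ⟨ModuleCat.ofHom h, ModuleCat.hom_ext hh⟩

theorem isHomExactAt_iff_subsingleton_ext (res : ProjectiveRes R M) (N : ModuleCat.{u} R) (j : ℕ) :
    res.IsHomExactAt N j ↔ Subsingleton (Ext M N (j + 1)) := by
  induction j generalizing M with
  | zero => exact (res.isHomExactAt_zero_iff N).trans (subsingleton_ext_one_iff res N).symm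
  | succ j ih =>
    have hS := LinearMap.shortExact_shortComplexKer res.surj
    have : Projective (ModuleCat.of R (res.P 0)) :=
      (IsProjective.iff_projective _).mp (res.projective 0)
    exact (ih res.syzygy).trans (subsingleton_ext_add_two_iff_of_shortExact hS N j).symm

theorem extSuccVanishes_of_isHomExactAt (res : ProjectiveRes R M) {N : ModuleCat.{u} R} {j : ℕ}
    (h : res.IsHomExactAt N j) : ExtSuccVanishes R M N j := fun res' =>
  (res'.isHomExactAt_iff_subsingleton_ext N j).mpr
    ((res.isHomExactAt_iff_subsingleton_ext N j).mp h)

end ProjectiveRes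

namespace IsGorensteinProjective

variable {M : ModuleCat.{u} R}

theorem exists_projectiveRes_isHomExactAt (hM : IsGorensteinProjective R M) :
    ∃ res : ProjectiveRes R M, ∀ Q : ModuleCat.{u} R, Module.Projective R Q →
      ∀ j, res.IsHomExactAt Q j := by
  obtain ⟨P, f, hP, -, hexact, htotal, ⟨e⟩⟩ := hM
  let π : P 1 →ₗ[R] LinearMap.ker (f (-1)) :=
    (f 0).codRestrict _ fun v => hexact (-1) ▸ LinearMap.mem_range_self _ v
  have hπ : Function.Surjective π := by
    rintro ⟨v, hv⟩
    obtain ⟨u, rfl⟩ := hexact (-1) ▸ hv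
    exact ⟨u, rfl⟩
  -- Unlike `P (↑(i + 1) + 1)` and `P (↑i + 1 + 1)`, the modules `P (k (i + 1))` and `P (k i + 1)`
  -- are identified without unfolding casts.
  let k : ℕ → ℤ := Nat.rec 1 fun _ z => z + 1
  exact ⟨{
    P := fun i => P (k i)
    d := fun i => f (k i)
    ε := e.symm.toLinearMap ∘ₗ π
    projective := fun i => hP (k i)
    surj := e.symm.surjective.comp hπ
    exact_zero := by
      rw [LinearEquiv.ker_comp, LinearMap.ker_codRestrict]
      exact hexact 0
    exact_succ := fun i => hexact (k i) }, fun Q hQ j => htotal Q hQ (k j)⟩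

theorem extSuccVanishes (hM : IsGorensteinProjective R M) {Q : ModuleCat.{u} R}
    (hQ : Module.Projective R Q) (j : ℕ) : ExtSuccVanishes R M Q j := by
  obtain ⟨res, hres⟩ := hM.exists_projectiveRes_isHomExactAt
  exact res.extSuccVanishes_of_isHomExactAt (hres Q hQ j)

end IsGorensteinProjective

theorem projective_of_isScalarTower {R A P : Type*} [Semiring R] [Semiring A] [Module R A]
    [IsScalarTower R A A] [Module.Projective R A] [AddCommMonoid P] [Module A P] [Module R P]
    [IsScalarTower R A P] [Module.Projective A P] : Module.Projective R P := by
  classical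
  obtain ⟨s, hs⟩ := Module.projective_def'.mp ‹Module.Projective A P›
  have : Module.Projective R (P →₀ A) :=
    .of_equiv' (finsuppLequivDFinsupp (ι := P) (M := A) R).symm
  exact .of_split (s.restrictScalars R) ((Finsupp.linearCombination A id).restrictScalars R)
    (LinearMap.ext fun v => LinearMap.congr_fun hs v)

section ScalarTower

variable [Module R A]

/-- A resolution over `A` viewed over `R`, when `A` is projective as a left `R`-module. -/
def ProjectiveRes.restrictScalars [IsScalarTower R A A] [Module.Projective R A] {M : Type u}
    [AddCommGroup M] [Module A M] [Module R M] [IsScalarTower R A M]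
    (res : ProjectiveRes A (ModuleCat.of A M))
    [∀ i, Module R (res.P i)] [∀ i, IsScalarTower R A (res.P i)] :
    ProjectiveRes R (ModuleCat.of R M) where
  P i := ModuleCat.of R (res.P i)
  d i := (res.d i).restrictScalars R
  ε := LinearMap.restrictScalars R (M₂ := M) res.ε
  projective i :=
    have := res.projective i
    projective_of_isScalarTower (A := A)
  surj := res.surj
  exact_zero := congrArg (Submodule.restrictScalars R) res.exact_zero
  exact_succ i := congrArg (Submodule.restrictScalars R) (res.exact_succ i)

variable (R A) in
/-- Dual bases `x`, `y` of `A` with respect to a form `τ : A → R`, with `R` acting on `A` through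
the ring homomorphism `r ↦ r • 1`. They make the trace `φ ↦ ∑ i, x i • φ (y i • ·)` produce
`A`-linear maps. -/
structure FrobeniusSystem_s15 (κ : Type*) [Fintype κ] where
  τ : A →ₗ[R] R
  x : κ → A
  y : κ → A
  sum_x_mul (a : A) : ∑ i, x i * τ (y i * a) • (1 : A) = a
  sum_smul_y (a : A) : ∑ i, τ (a * x i) • y i = a

namespace FrobeniusSystem_s15

variable {κ : Type*} [Fintype κ] (F : FrobeniusSystem_s15 R A κ)

include F in
theorem projective [IsScalarTower R A A] : Module.Projective R A :=
  .of_split (LinearMap.pi fun i => F.τ ∘ₗ LinearMap.mulRight R (F.x i))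
    (Fintype.linearCombination R F.y) (LinearMap.ext F.sum_smul_y)

variable {X Y Z : Type*} [AddCommGroup X] [Module A X] [Module R X] [IsScalarTower R A X]
  [AddCommGroup Y] [Module A Y] [Module R Y] [IsScalarTower R A Y]
  [AddCommGroup Z] [Module A Z] [Module R Z] [IsScalarTower R A Z]

theorem map_y_smul_smul {W : Type*} [AddCommGroup W] [Module R W]
    (φ : X →ₗ[R] W) (i : κ) (a : A) (v : X) :
    φ (F.y i • a • v) = ∑ k, F.τ (F.y i * (a * F.x k)) • φ (F.y k • v) := by
  calc φ (F.y i • a • v)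
      = φ ((∑ k, F.τ (F.y i * a * F.x k) • F.y k) • v) := by rw [F.sum_smul_y, mul_smul]
    _ = ∑ k, F.τ (F.y i * (a * F.x k)) • φ (F.y k • v) := by
        simp only [Finset.sum_smul, smul_assoc, map_sum, map_smul, mul_assoc]

theorem sum_x_smul (a : A) (v : X) : ∑ i, F.x i • F.τ (F.y i * a) • v = a • v := by
  calc ∑ i, F.x i • F.τ (F.y i * a) • v
      = ∑ i, (F.x i * F.τ (F.y i * a) • (1 : A)) • v := by
        simp only [mul_smul, smul_assoc, one_smul]
    _ = a • v := by rw [← Finset.sum_smul, F.sum_x_mul]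

/-- The trace of an `R`-linear map between `A`-modules, which turns `R`-linear coboundaries into
`A`-linear ones. -/
def trace (φ : X →ₗ[R] Y) : X →ₗ[A] Y where
  toFun v := ∑ i, F.x i • φ (F.y i • v)
  map_add' v w := by simp only [smul_add, map_add, Finset.sum_add_distrib]
  map_smul' a v := by
    simp only [F.map_y_smul_smul, Finset.smul_sum, RingHom.id_apply]
    rw [Finset.sum_comm]
    simp only [F.sum_x_smul, mul_smul]

theorem trace_apply (φ : X →ₗ[R] Y) (v : X) : F.trace φ v = ∑ i, F.x i • φ (F.y i • v) := rfl

theorem trace_comp_restrictScalars (φ : Y →ₗ[R] Z) (f : X →ₗ[A] Y) :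
    F.trace (φ ∘ₗ f.restrictScalars R) = F.trace φ ∘ₗ f := by
  ext v
  simp [trace_apply]

theorem trace_restrictScalars_comp (f : Y →ₗ[A] Z) (φ : X →ₗ[R] Y) :
    F.trace (f.restrictScalars R ∘ₗ φ) = f ∘ₗ F.trace φ := by
  ext v
  simp [trace_apply]

theorem trace_finsuppMapRange (α : Type*) (φ : X →ₗ[R] Y) :
    F.trace (Finsupp.mapRange.linearMap (α := α) φ) =
      Finsupp.mapRange.linearMap (α := α) (F.trace φ) := by
  refine LinearMap.ext fun v => Finsupp.ext fun q => ?_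
  simp [trace_apply, Finsupp.finsetSum_apply]

theorem trace_toSpanSingleton_comp_τ [IsScalarTower R A A] :
    F.trace (LinearMap.toSpanSingleton R A 1 ∘ₗ F.τ) = .id :=
  LinearMap.ext F.sum_x_mul

theorem exists_trace_eq_id [IsScalarTower R A A] [Module.Projective A X] :
    ∃ θ : X →ₗ[R] X, F.trace θ = .id := by
  obtain ⟨s, hs⟩ := Module.projective_def'.mp ‹Module.Projective A X›
  let t : (X →₀ A) →ₗ[R] (X →₀ A) :=
    Finsupp.mapRange.linearMap (LinearMap.toSpanSingleton R A 1 ∘ₗ F.τ)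
  have ht : F.trace t = .id := by
    rw [trace_finsuppMapRange, trace_toSpanSingleton_comp_τ, Finsupp.mapRange.linearMap_id]
  refine ⟨(Finsupp.linearCombination A id).restrictScalars R ∘ₗ t ∘ₗ s.restrictScalars R, ?_⟩
  rw [trace_restrictScalars_comp, trace_comp_restrictScalars, ht, LinearMap.id_comp, hs]

theorem extSuccVanishes_of_trace_eq_id [IsScalarTower R A A] {M P : Type u}
    [AddCommGroup M] [Module A M] [Module R M] [IsScalarTower R A M]
    [AddCommGroup P] [Module A P] [Module R P] [IsScalarTower R A P]
    {θ : P →ₗ[R] P} (hθ : F.trace θ = .id) {j : ℕ}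
    (h : ExtSuccVanishes R (ModuleCat.of R M) (ModuleCat.of R P) j) :
    ExtSuccVanishes A (ModuleCat.of A M) (ModuleCat.of A P) j := by
  intro res (g : res.P (j + 1) →ₗ[A] P) hg
  let _ (i : ℕ) : Module R (res.P i) := Module.compHom _ (RingHom.smulOneHom : R →+* A)
  have _ (i : ℕ) : IsScalarTower R A (res.P i) :=
    ⟨fun r a v => by rw [← smul_one_mul r a, mul_smul]; rfl⟩
  have := F.projective
  have hθg : (θ ∘ₗ g.restrictScalars R) ∘ₗ (res.d (j + 1)).restrictScalars R = 0 :=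
    LinearMap.ext fun v => (congrArg θ (LinearMap.congr_fun hg v)).trans θ.map_zero
  obtain ⟨h', hh'⟩ : ∃ h' : res.P j →ₗ[R] P,
      h' ∘ₗ (res.d j).restrictScalars R = θ ∘ₗ g.restrictScalars R :=
    h res.restrictScalars (θ ∘ₗ g.restrictScalars R) hθg
  refine ⟨F.trace h', ?_⟩
  calc F.trace h' ∘ₗ res.d j
      = F.trace (h' ∘ₗ (res.d j).restrictScalars R) := (F.trace_comp_restrictScalars _ _).symm
    _ = F.trace (θ ∘ₗ g.restrictScalars R) := by rw [hh']
    _ = g := by rw [trace_comp_restrictScalars, hθ, LinearMap.id_comp]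

include F in
theorem extSuccVanishes_of_forall_projective [IsScalarTower R A A] {M : Type u}
    [AddCommGroup M] [Module A M] [Module R M] [IsScalarTower R A M] {P : Type u}
    [AddCommGroup P] [Module A P] [Module R P] [IsScalarTower R A P] [Module.Projective A P] {j : ℕ}
    (hM : ∀ Q : ModuleCat.{u} R, Module.Projective R Q →
      ExtSuccVanishes R (ModuleCat.of R M) Q j) :
    ExtSuccVanishes A (ModuleCat.of A M) (ModuleCat.of A P) j := by
  have := F.projective
  obtain ⟨θ, hθ⟩ := F.exists_trace_eq_id (X := P)
  exact F.extSuccVanishes_of_trace_eq_id hθ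
    (hM (ModuleCat.of R P) (projective_of_isScalarTower (A := A)))

end FrobeniusSystem_s15

end ScalarTower

theorem stmt15_general (ι : R →+* A) {κ : Type*} [Fintype κ] (τ : A →+ R) (x y : κ → A)
    (hτ : ∀ (r : R) (a : A), τ (ι r * a) = r * τ a)
    (hxy : ∀ a : A, ∑ i, x i * ι (τ (y i * a)) = a)
    (hyx : ∀ a : A, ∑ i, ι (τ (a * x i)) * y i = a)
    (M : Type u) [AddCommGroup M] [Module A M] (j : ℕ)
    (hM : ∀ Q : ModuleCat.{u} R, Module.Projective R Q →
      ExtSuccVanishes R (@ModuleCat.of R _ M _ (Module.compHom M ι)) Q j) :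
    ∀ P : ModuleCat.{u} A, Module.Projective A P → ExtSuccVanishes A (ModuleCat.of A M) P j := by
  intro P _
  let _ : Module R A := Module.compHom A ι
  let _ : Module R M := Module.compHom M ι
  let _ : Module R P := Module.compHom P ι
  have : IsScalarTower R A A := SMul.comp.isScalarTower ι
  have : IsScalarTower R A M := SMul.comp.isScalarTower ι
  have : IsScalarTower R A P := SMul.comp.isScalarTower ι
  let F : FrobeniusSystem_s15 R A κ :=
    { τ := { τ with map_smul' := hτ }
      x := x
      y := y
      sum_x_mul := fun a =>
        (Finset.sum_congr rfl fun i _ => congrArg (x i * ·) (mul_one _)).trans (hxy a)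
      sum_smul_y := hyx }
  exact F.extSuccVanishes_of_forall_projective (P := P) hM

theorem stmt15 (ι : R →+* A) (hF : IsFrobeniusExtension ι)
    (M : Type u) [AddCommGroup M] [Module A M]
    (hM : IsGorensteinProjective R (@ModuleCat.of R _ M _ (Module.compHom M ι))) :
    ∀ P : ModuleCat.{u} A, Module.Projective A P →
      ∀ j : ℕ, ExtSuccVanishes A (ModuleCat.of A M) P j := by
  obtain ⟨-, τ, n, x, y, hτ, -, hxy, hyx⟩ := hF
  exact fun P hP j =>
    stmt15_general ι τ x y hτ hxy hyx M j (fun Q hQ => hM.extSuccVanishes hQ j) P hP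

end Statement
end

section
/- Let R ⊂ A be a Frobenius extension of rings and let M be a left A-module. If G-pd_A M < ∞ and n ∈ ℕ is such that Ext^{n+i}_A(M, P) = 0 for every projective left A-module P and every i ≥ 1, then G-pd_A M ≤ n; in particular, if G-pd_A M < ∞ and G-pd_R M = n < ∞, then Ext^{n+i}_A(M, P) = 0 for all projective left A-modules P and all i ≥ 1, and hence G-pd_A M ≤ G-pd_R M. -/
universe u

section Statement

variable {R A : Type u} [Ring R] [Ring A]

/-!
If `M` has finite Gorenstein projective dimension and `Ext^k_A(M, P) = 0` for all projective `P`
and all `k > n`, then by dimension shifting an `n`-th syzygy `K` of `M` with Gorenstein projective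
terms has finite Gorenstein projective dimension and no higher extensions by projectives. Such a
`K` is Gorenstein projective: inductively it is a quotient `G/G'` of Gorenstein projectives. Push
out along an embedding of `G'` into a projective `P` to get an extension `E` of `K` by `P`, which
is Gorenstein projective, and embed `E` into a projective `Q`. Then `Q/P` is an extension of
`Q/E` by `K`, so `Ext^1(Q/P, P) = 0`; hence `Q/P` is projective, and `K` embeds into `Q/P` with
Gorenstein projective quotient `Q/E`.

For the comparison, restriction of scalars is exact and left adjoint to coinduction
`N ↦ Hom_R(A, N)`. As `A` is projective over `R`, restriction preserves projectives, so that
`Ext^k_A(M, Hom_R(A, N))` vanishes whenever `Ext^k_R(M, N)` does. The dual bases give an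
epimorphism `Hom_R(A, Q) → Q`, `φ ↦ ∑ x_i φ(y_i)`, for every `A`-module `Q`. If `Q` is projective
it splits, and `Ext^k_A(M, Q)` is a direct summand of `Ext^k_A(M, Hom_R(A, Q))`.
-/

universe v w u'

section ShortExactSequences

open CategoryTheory Limits Abelian ZeroObject

variable {C : Type u'} [Category.{v} C] [Abelian C]

/-- The sequence `0 → X → Y → Z → 0` formed by `i` and `p` is short exact. This is
`ShortComplex.ShortExact` as a predicate on a pair of morphisms, so that the three objects can be
prescribed. -/
def IsShortExact {X Y Z : C} (i : X ⟶ Y) (p : Y ⟶ Z) : Prop :=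
  ∃ w : i ≫ p = 0, (ShortComplex.mk i p w).ShortExact

variable {X Y Z : C} {i : X ⟶ Y} {p : Y ⟶ Z}

lemma isShortExact_of_mono_of_isColimit [Mono i] {w : i ≫ p = 0}
    (h : IsColimit (CokernelCofork.ofπ p w)) : IsShortExact i p :=
  ⟨w, .mk' (ShortComplex.exact_of_g_is_cokernel _ h) ‹_› (epi_of_isColimit_cofork h)⟩

namespace IsShortExact

lemma comp_eq_zero (h : IsShortExact i p) : i ≫ p = 0 := h.1

lemma mono (h : IsShortExact i p) : Mono i := h.2.mono_f

lemma epi (h : IsShortExact i p) : Epi p := h.2.epi_g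

lemma exists_desc (h : IsShortExact i p) {T : C} (k : Y ⟶ T) (hk : i ≫ k = 0) :
    ∃ l, p ≫ l = k :=
  have := h.epi
  ⟨h.2.exact.desc k hk, h.2.exact.g_desc k hk⟩

lemma pushout (h : IsShortExact i p) {X' E : C} {g : X ⟶ X'} {g' : Y ⟶ E} {i' : X' ⟶ E}
    (sq : IsPushout i g g' i') : ∃ p' : E ⟶ Z, g' ≫ p' = p ∧ IsShortExact i' p' := by
  have := h.mono
  have := h.epi
  have : Mono i' := mono_inr_of_isColimit i g sq.isColimit
  let p' : E ⟶ Z := sq.desc p 0 (by rw [h.comp_eq_zero, comp_zero])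
  have hg' : g' ≫ p' = p := sq.inl_desc ..
  have hi' : i' ≫ p' = 0 := sq.inr_desc ..
  have : Epi p' := epi_of_epi_fac hg'
  refine ⟨p', hg', isShortExact_of_mono_of_isColimit <|
    CokernelCofork.IsColimit.ofπ' p' hi' fun k hk => ?_⟩
  have hgk : i ≫ g' ≫ k = 0 := by rw [sq.w_assoc, hk, comp_zero]
  refine ⟨h.2.exact.desc (g' ≫ k) hgk, sq.hom_ext ?_ ?_⟩
  · rw [reassoc_of% hg']
    exact h.2.exact.g_desc _ _
  · rw [reassoc_of% hi', hk, zero_comp]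

lemma exists_pushout {K G M P K' : C} {i : K ⟶ G} {p : G ⟶ M} {j : K ⟶ P} {q : P ⟶ K'}
    (h : IsShortExact i p) (h' : IsShortExact j q) :
    ∃ (E : C) (a : P ⟶ E) (b : E ⟶ M) (c : G ⟶ E) (d : E ⟶ K'),
      IsShortExact a b ∧ IsShortExact c d := by
  have sq := IsPushout.of_hasPushout i j
  obtain ⟨b, -, hb⟩ := h.pushout sq
  obtain ⟨d, -, hd⟩ := h'.pushout sq.flip
  exact ⟨_, _, b, _, d, hb, hd⟩

lemma exists_isShortExact_comp {A B D X Y : C} {i : A ⟶ B} {p : B ⟶ X} {j : B ⟶ D} {q : D ⟶ Y}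
    (h : IsShortExact i p) (h' : IsShortExact j q) :
    ∃ (W : C) (r : D ⟶ W) (a : X ⟶ W) (b : W ⟶ Y),
      IsShortExact (i ≫ j) r ∧ IsShortExact a b := by
  have := h.mono
  have := h.epi
  have := h'.mono
  have sq := IsPushout.of_hasPushout j p
  obtain ⟨b, -, hb⟩ := h'.pushout sq
  have w : (i ≫ j) ≫ pushout.inl j p = 0 := by
    rw [Category.assoc, sq.w, reassoc_of% h.comp_eq_zero, zero_comp]
  refine ⟨_, pushout.inl j p, _, b, isShortExact_of_mono_of_isColimit <|
    CokernelCofork.IsColimit.ofπ' _ w fun {T} k hk => ?_, hb⟩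
  rw [Category.assoc] at hk
  exact ⟨pushout.desc k (h.2.exact.desc (j ≫ k) hk) (h.2.exact.g_desc _ _).symm,
    pushout.inl_desc ..⟩

lemma of_isIso (i : X ⟶ Y) [IsIso i] : IsShortExact i (0 : Y ⟶ (0 : C)) :=
  isShortExact_of_mono_of_isColimit (w := comp_zero) <|
    CokernelCofork.IsColimit.ofπ' _ _ fun k hk =>
      ⟨0, by rw [comp_zero, ← cancel_epi i, hk, comp_zero]⟩

lemma projective_mid (h : IsShortExact i p) [Projective X] [Projective Z] : Projective Y :=
  (projective_iff_hasProjectiveDimensionLT_one).2 <| h.2.hasProjectiveDimensionLT_X₂ 1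
    (inferInstanceAs (HasProjectiveDimensionLT X 1))
    (inferInstanceAs (HasProjectiveDimensionLT Z 1))

end IsShortExact

lemma isShortExact_kernel_ι (p : Y ⟶ Z) [Epi p] : IsShortExact (kernel.ι p) p :=
  ⟨kernel.condition p, .mk' (ShortComplex.exact_of_f_is_kernel _ (kernelIsKernel p))
    inferInstance inferInstance⟩

end ShortExactSequences

section ExtVanishing

open CategoryTheory Limits Abelian

variable {C : Type u'} [Category.{v} C] [Abelian C] [HasExt.{w} C]

namespace IsShortExact

variable {X Y Z Q : C} {i : X ⟶ Y} {p : Y ⟶ Z} {n : ℕ}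

lemma subsingleton_ext_left (h : IsShortExact i p) (hY : Subsingleton (Ext Y Q n))
    (hZ : Subsingleton (Ext Z Q (n + 1))) : Subsingleton (Ext X Q n) := by
  refine subsingleton_of_forall_eq 0 fun x => ?_
  obtain ⟨y, rfl⟩ := Ext.contravariant_sequence_exact₁ h.2 Q x (add_comm 1 n)
    (hZ.elim _ _)
  rw [hY.elim y 0, Ext.comp_zero]

lemma subsingleton_ext_mid (h : IsShortExact i p) (hX : Subsingleton (Ext X Q n))
    (hZ : Subsingleton (Ext Z Q n)) : Subsingleton (Ext Y Q n) := by
  refine subsingleton_of_forall_eq 0 fun y => ?_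
  obtain ⟨z, rfl⟩ := Ext.contravariant_sequence_exact₂ h.2 Q y (hX.elim _ _)
  rw [hZ.elim z 0, Ext.comp_zero]

lemma subsingleton_ext_right (h : IsShortExact i p) (hX : Subsingleton (Ext X Q n))
    (hY : Subsingleton (Ext Y Q (n + 1))) : Subsingleton (Ext Z Q (n + 1)) := by
  refine subsingleton_of_forall_eq 0 fun z => ?_
  obtain ⟨x, rfl⟩ := Ext.contravariant_sequence_exact₃ h.2 Q z (hY.elim _ _)
    (add_comm 1 n)
  rw [hX.elim x 0, Ext.comp_zero]

lemma exists_extension (h : IsShortExact i p) (hZ : Subsingleton (Ext Z Q 1)) (g : X ⟶ Q) :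
    ∃ f : Y ⟶ Q, i ≫ f = g := by
  obtain ⟨y, hy⟩ := Ext.contravariant_sequence_exact₁ h.2 Q (Ext.mk₀ g) (add_comm 1 0)
    (hZ.elim _ _)
  obtain ⟨f, rfl⟩ := (Ext.mk₀_bijective _ _).2 y
  rw [Ext.mk₀_comp_mk₀] at hy
  exact ⟨f, (Ext.mk₀_bijective _ _).1 hy⟩

lemma subsingleton_ext_one [Projective Y] (h : IsShortExact i p)
    (hext : ∀ g : X ⟶ Q, ∃ f : Y ⟶ Q, i ≫ f = g) : Subsingleton (Ext Z Q 1) := by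
  refine subsingleton_of_forall_eq 0 fun z => ?_
  obtain ⟨x, rfl⟩ := Ext.contravariant_sequence_exact₃ h.2 Q z
    (Ext.eq_zero_of_projective _) (add_comm 1 0)
  obtain ⟨g, rfl⟩ := (Ext.mk₀_bijective _ _).2 x
  obtain ⟨f, rfl⟩ := hext g
  rw [← Ext.mk₀_comp_mk₀]
  exact h.2.extClass_comp_assoc _

lemma exists_reverse (h : IsShortExact i p) (hZ : Subsingleton (Ext Z X 1)) :
    ∃ (s : Z ⟶ Y) (r : Y ⟶ X), s ≫ p = 𝟙 Z ∧ IsShortExact s r := by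
  obtain ⟨r, hr⟩ := h.exists_extension hZ (𝟙 X)
  have := h.epi
  let σ := ShortComplex.Splitting.ofExactOfRetraction _ h.2.exact r hr ‹_›
  let τ : (ShortComplex.mk σ.s r σ.s_r).Splitting :=
    { r := p, s := i, f_r := σ.s_g, s_g := σ.f_r, id := by rw [add_comm]; exact σ.id }
  exact ⟨σ.s, r, σ.s_g, σ.s_r, τ.shortExact⟩

end IsShortExact

/-- Vanishing of `Ext^k(X, Q)` for all projective `Q` and all `k > n`; for objects of finite
Gorenstein projective dimension this says that the dimension is at most `n`. -/
def ProjExtVanishAbove (n : ℕ) (X : C) : Prop :=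
  ∀ (Q : C) [Projective Q] (k : ℕ), n < k → Subsingleton (Ext X Q k)

lemma projExtVanishAbove_zero_of_projective (X : C) [Projective X] :
    ProjExtVanishAbove 0 X :=
  fun Q _ k hk => HasProjectiveDimensionLT.subsingleton X 1 k hk Q

namespace ProjExtVanishAbove

variable {X Y Z : C} {i : X ⟶ Y} {p : Y ⟶ Z} {m n : ℕ}

lemma mono (hX : ProjExtVanishAbove m X) (hmn : m ≤ n) : ProjExtVanishAbove n X :=
  fun Q _ k hk => hX Q k (hmn.trans_lt hk)

lemma left (h : IsShortExact i p) (hY : ProjExtVanishAbove n Y)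
    (hZ : ProjExtVanishAbove (n + 1) Z) : ProjExtVanishAbove n X :=
  fun Q _ k hk => h.subsingleton_ext_left (hY Q k hk) (hZ Q (k + 1) (by lia))

lemma mid (h : IsShortExact i p) (hX : ProjExtVanishAbove n X)
    (hZ : ProjExtVanishAbove n Z) : ProjExtVanishAbove n Y :=
  fun Q _ k hk => h.subsingleton_ext_mid (hX Q k hk) (hZ Q k hk)

lemma right (h : IsShortExact i p) (hX : ProjExtVanishAbove n X)
    (hY : ProjExtVanishAbove (n + 1) Y) : ProjExtVanishAbove (n + 1) Z := by
  rintro Q _ (_ | k) hk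
  · lia
  · exact h.subsingleton_ext_right (hX Q k (by lia)) (hY Q (k + 1) hk)

end ProjExtVanishAbove

end ExtVanishing

section GorensteinProjectiveObjects

open CategoryTheory Limits Abelian ZeroObject

variable {C : Type u'} [Category.{v} C] [Abelian C] [HasExt.{w} C]

/-- The extension of `Z` by `P` obtained by pushing out along `X ↪ P` splits, so that its middle
term can in turn be pushed out along `Z ↪ Q`. -/
lemma IsShortExact.exists_projective_mono {X Y Z X₁ Z₁ P Q : C} {i : X ⟶ Y} {p : Y ⟶ Z}
    {a : X ⟶ P} {b : P ⟶ X₁} {c : Z ⟶ Q} {d : Q ⟶ Z₁} [Projective P] [Projective Q]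
    (h : IsShortExact i p) (hX : IsShortExact a b) (hZ : IsShortExact c d)
    (hZP : Subsingleton (Ext Z P 1)) :
    ∃ (F Y₁ : C) (e : Y ⟶ F) (f : F ⟶ Y₁) (k : X₁ ⟶ Y₁) (l : Y₁ ⟶ Z₁),
      Projective F ∧ IsShortExact e f ∧ IsShortExact k l := by
  obtain ⟨E, _, _, e, f, hPEZ, hYEX₁⟩ := h.exists_pushout hX
  obtain ⟨s, r, -, hZEP⟩ := hPEZ.exists_reverse hZP
  obtain ⟨F, _, _, e', f', hQFP, hEFZ₁⟩ := hZEP.exists_pushout hZ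
  obtain ⟨Y₁, _, _, _, hYFY₁, hX₁Y₁Z₁⟩ := hYEX₁.exists_isShortExact_comp hEFZ₁
  exact ⟨F, Y₁, _, _, _, _, hQFP.projective_mid, hYFY₁, hX₁Y₁Z₁⟩

/-- One step of a projective coresolution: `X` embeds into a projective object with a quotient
satisfying `W`, and all higher extensions of `X` by projectives vanish. -/
def ProjCoresolves (W : C → Prop) (X : C) : Prop :=
  ProjExtVanishAbove 0 X ∧ ∃ (P Y : C) (i : X ⟶ P) (p : P ⟶ Y),
    Projective P ∧ IsShortExact i p ∧ W Y

/-- Gorenstein projective objects of an abelian category, without a totally acyclic complex: the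
greatest class of objects `X` such that `Ext^k(X, Q) = 0` for `k > 0` and `Q` projective and such
that `X` embeds into a projective object with quotient again in the class. Membership is proved by
exhibiting some class `W` which is closed in this sense. -/
def IsGorensteinProjectiveObj (X : C) : Prop :=
  ∃ W : C → Prop, (∀ Y, W Y → ProjCoresolves W Y) ∧ W X

lemma ProjCoresolves.imp {W W' : C → Prop} (hW : ∀ Y, W Y → W' Y) {X : C}
    (h : ProjCoresolves W X) : ProjCoresolves W' X :=
  let ⟨hX, P, Y, i, p, hP, hip, hY⟩ := h
  ⟨hX, P, Y, i, p, hP, hip, hW Y hY⟩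

namespace IsGorensteinProjectiveObj

variable {X Y Z : C} {i : X ⟶ Y} {p : Y ⟶ Z}

lemma projCoresolves (h : IsGorensteinProjectiveObj X) :
    ProjCoresolves IsGorensteinProjectiveObj X :=
  let ⟨W, hW, hX⟩ := h
  (hW X hX).imp fun _ hY => ⟨W, hW, hY⟩

lemma of_projCoresolves (h : ProjCoresolves IsGorensteinProjectiveObj X) :
    IsGorensteinProjectiveObj X :=
  ⟨ProjCoresolves IsGorensteinProjectiveObj,
    fun _ hY => hY.imp fun _ => projCoresolves, h⟩

lemma projExtVanishAbove (h : IsGorensteinProjectiveObj X) : ProjExtVanishAbove 0 X :=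
  h.projCoresolves.1

lemma of_projective (X : C) [Projective X] : IsGorensteinProjectiveObj X := by
  refine ⟨fun Y => Projective Y, fun Y _ => ?_, ‹_›⟩
  exact ⟨projExtVanishAbove_zero_of_projective Y, Y, _, 𝟙 Y, _, ‹_›, .of_isIso _, inferInstance⟩

lemma mid (h : IsShortExact i p) (hX : IsGorensteinProjectiveObj X)
    (hZ : IsGorensteinProjectiveObj Z) : IsGorensteinProjectiveObj Y := by
  let W (E : C) : Prop := ∃ (X Z : C) (i : X ⟶ E) (p : E ⟶ Z),
    IsShortExact i p ∧ IsGorensteinProjectiveObj X ∧ IsGorensteinProjectiveObj Z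
  suffices hW : ∀ E, W E → ProjCoresolves W E from ⟨W, hW, X, Z, i, p, h, hX, hZ⟩
  rintro E ⟨X, Z, i, p, h, hX, hZ⟩
  obtain ⟨hXext, P, X₁, _, _, _, hP, hX₁⟩ := hX.projCoresolves
  obtain ⟨hZext, Q, Z₁, _, _, _, hQ, hZ₁⟩ := hZ.projCoresolves
  obtain ⟨F, Y₁, e, f, k, l, hF, hef, hkl⟩ :=
    h.exists_projective_mono hP hQ (hZext P 1 one_pos)
  exact ⟨.mid h hXext hZext, F, Y₁, e, f, hF, hef, X₁, Z₁, k, l, hkl, hX₁, hZ₁⟩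

lemma of_iso (hX : IsGorensteinProjectiveObj X) (e : X ≅ Y) : IsGorensteinProjectiveObj Y :=
  mid (.of_isIso e.hom) hX (of_projective 0)

lemma right (h : IsShortExact i p) (hX : IsGorensteinProjectiveObj X)
    (hY : IsGorensteinProjectiveObj Y) (hZ : ProjExtVanishAbove 0 Z) :
    IsGorensteinProjectiveObj Z := by
  obtain ⟨-, P, X₁, _, _, _, hXPX₁, hX₁⟩ := hX.projCoresolves
  obtain ⟨E, _, _, _, _, hPEZ, hYEX₁⟩ := h.exists_pushout hXPX₁
  obtain ⟨-, Q, E₁, _, _, _, hEQE₁, hE₁⟩ := (mid hYEX₁ hY hX₁).projCoresolves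
  obtain ⟨V, _, _, _, hPQV, hZVE₁⟩ := hPEZ.exists_isShortExact_comp hEQE₁
  have hV : ProjExtVanishAbove 0 V := .mid hZVE₁ hZ hE₁.projExtVanishAbove
  obtain ⟨s, _, hs, -⟩ := hPQV.exists_reverse (hV P 1 one_pos)
  have : Projective V := Retract.projective ⟨s, _, hs⟩
  exact of_projCoresolves ⟨hZ, V, E₁, _, _, this, hZVE₁, hE₁⟩

end IsGorensteinProjectiveObj

end GorensteinProjectiveObjects

section BiinfiniteChains

open CategoryTheory Limits Abelian

lemma exists_int_chain {α : Type*} {r : α → α → Prop} (hl : ∀ x, ∃ y, r y x)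
    (hr : ∀ x, ∃ y, r x y) (x : α) (k : ℤ) :
    ∃ S : ℤ → α, S k = x ∧ ∀ i, r (S (i + 1)) (S i) := by
  choose next hnext using hl
  choose prev hprev using hr
  let T : ℤ → α
    | .ofNat n => n.rec x fun _ => next
    | .negSucc n => prev (n.rec x fun _ => prev)
  have hT : ∀ i, r (T (i + 1)) (T i)
    | .ofNat n => hnext _
    | .negSucc 0 => hprev x
    | .negSucc (n + 1) => hprev _
  refine ⟨fun i => T (i - k), congrArg T (sub_self k), fun i => ?_⟩
  simpa only [add_sub_right_comm] using hT (i - k)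

variable {C : Type u'} [Category.{v} C] [Abelian C] [HasExt.{w} C]

lemma isGorensteinProjectiveObj_of_int_chain {K P : ℤ → C} [∀ i, Projective (P i)]
    {a : ∀ i, K (i + 1) ⟶ P i} {b : ∀ i, P i ⟶ K i} (h : ∀ i, IsShortExact (a i) (b i))
    (hext : ∀ (Q : C) [Projective Q] i (g : K (i + 1) ⟶ Q), ∃ f, a i ≫ f = g) (i : ℤ) :
    IsGorensteinProjectiveObj (K i) := by
  have hvanish (Q : C) [Projective Q] (k : ℕ) :
      ∀ i, Subsingleton (Ext (K i) Q (k + 1)) := by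
    induction k with
    | zero => exact fun i => (h i).subsingleton_ext_one (hext Q i)
    | succ k ih =>
      exact fun i => (h i).subsingleton_ext_right (ih _)
        (HasProjectiveDimensionLT.subsingleton (P i) 1 _ (by lia) Q)
  refine ⟨fun Y => ∃ j, Y = K (j + 1), ?_, i - 1, by rw [sub_add_cancel]⟩
  rintro _ ⟨j, rfl⟩
  refine ⟨fun Q _ k hk => ?_, P j, K j, a j, b j, inferInstance, h j, j - 1,
    by rw [sub_add_cancel]⟩
  obtain ⟨k, rfl⟩ := Nat.exists_eq_add_one.2 hk
  exact hvanish Q k _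

namespace IsGorensteinProjectiveObj

lemma left_of_projective {X P Y : C} [Projective P] {i : X ⟶ P} {p : P ⟶ Y}
    (h : IsShortExact i p) (hY : IsGorensteinProjectiveObj Y) : IsGorensteinProjectiveObj X :=
  of_projCoresolves
    ⟨.left h (projExtVanishAbove_zero_of_projective P) (hY.projExtVanishAbove.mono zero_le_one),
      P, Y, i, p, ‹_›, h, hY⟩

lemma exists_int_chain [EnoughProjectives C] {X : C} (hX : IsGorensteinProjectiveObj X) (k : ℤ) :
    ∃ (K P : ℤ → C) (a : ∀ i, K (i + 1) ⟶ P i) (b : ∀ i, P i ⟶ K i), K k = X ∧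
      (∀ i, IsGorensteinProjectiveObj (K i)) ∧ (∀ i, Projective (P i)) ∧
      ∀ i, IsShortExact (a i) (b i) := by
  let r (Y Z : {Y : C // IsGorensteinProjectiveObj Y}) : Prop :=
    ∃ (P : C) (a : Y.1 ⟶ P) (b : P ⟶ Z.1), Projective P ∧ IsShortExact a b
  have hl (Z) : ∃ Y, r Y Z :=
    have h := isShortExact_kernel_ι (Projective.π Z.1)
    ⟨⟨_, left_of_projective h Z.2⟩, _, _, _, inferInstance, h⟩
  have hr (Y) : ∃ Z, r Y Z :=
    let ⟨_, P, Z, a, b, hP, hab, hZ⟩ := Y.2.projCoresolves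
    ⟨⟨Z, hZ⟩, P, a, b, hP, hab⟩
  obtain ⟨K, hK, hrK⟩ := _root_.exists_int_chain hl hr ⟨X, hX⟩ k
  choose P a b hP hab using hrK
  exact ⟨fun i => K i, P, a, b, congrArg Subtype.val hK, fun i => (K i).2, hP, hab⟩

end IsGorensteinProjectiveObj

end BiinfiniteChains

section Modules

open CategoryTheory

lemma isShortExact_ofHom {X Y Z : Type u} [AddCommGroup X] [AddCommGroup Y] [AddCommGroup Z]
    [Module R X] [Module R Y] [Module R Z] {i : X →ₗ[R] Y} {p : Y →ₗ[R] Z}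
    (hi : Function.Injective i) (h : Function.Exact i p) (hp : Function.Surjective p) :
    IsShortExact (ModuleCat.ofHom i) (ModuleCat.ofHom p) :=
  ⟨ModuleCat.hom_ext h.linearMap_comp_eq_zero, ModuleCat.shortComplex_shortExact _ h hi hp⟩

lemma isShortExact_ofHom_ker_subtype {Y Z : Type u} [AddCommGroup Y] [AddCommGroup Z]
    [Module R Y] [Module R Z] {p : Y →ₗ[R] Z} (hp : Function.Surjective p) :
    IsShortExact (ModuleCat.ofHom (LinearMap.ker p).subtype) (ModuleCat.ofHom p) :=
  isShortExact_ofHom Subtype.val_injective (LinearMap.exact_subtype_ker_map p) hp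

lemma isShortExact_ofHom_codRestrict_ker {X Y Z : Type u} [AddCommGroup X] [AddCommGroup Y]
    [AddCommGroup Z] [Module R X] [Module R Y] [Module R Z] {f : X →ₗ[R] Y} {g : Y →ₗ[R] Z}
    (h : LinearMap.range f = LinearMap.ker g) :
    IsShortExact (ModuleCat.ofHom (LinearMap.ker f).subtype)
      (ModuleCat.ofHom (f.codRestrict (LinearMap.ker g) fun x => h.le ⟨x, rfl⟩)) := by
  refine isShortExact_ofHom Subtype.val_injective ?_ fun ⟨y, hy⟩ => ?_
  · rw [LinearMap.exact_iff, LinearMap.ker_codRestrict, Submodule.range_subtype]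
  · obtain ⟨x, rfl⟩ := h.ge hy
    exact ⟨x, rfl⟩

namespace IsShortExact

variable {X Y Z : ModuleCat.{u} R} {i : X ⟶ Y} {p : Y ⟶ Z}

lemma injective (h : IsShortExact i p) : Function.Injective i.hom :=
  (ModuleCat.mono_iff_injective i).1 h.mono

lemma surjective (h : IsShortExact i p) : Function.Surjective p.hom :=
  (ModuleCat.epi_iff_surjective p).1 h.epi

lemma range_eq_ker (h : IsShortExact i p) : LinearMap.range i.hom = LinearMap.ker p.hom :=
  h.2.exact.moduleCat_range_eq_ker

end IsShortExact

lemma IsGorensteinProjective.isGorensteinProjectiveObj {M : ModuleCat.{u} R}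
    (hM : IsGorensteinProjective R M) : IsGorensteinProjectiveObj M := by
  obtain ⟨P, f, hP, hcomp, hexact, hext, ⟨e⟩⟩ := hM
  have (i : ℤ) : Projective (P (i + 1 + 1)) := (IsProjective.iff_projective _).1 (hP _)
  let b (i : ℤ) : P (i + 1 + 1) →ₗ[R] LinearMap.ker (f i) :=
    (f (i + 1)).codRestrict _ fun x => (hexact i).le ⟨x, rfl⟩
  have hses (i : ℤ) : IsShortExact _ (ModuleCat.ofHom (b i)) :=
    isShortExact_ofHom_codRestrict_ker (hexact i)
  refine .of_iso (isGorensteinProjectiveObj_of_int_chain hses (fun Q _ i g => ?_) (-1))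
    e.symm.toModuleIso
  have hbf : b (i + 1) ∘ₗ f (i + 1 + 1 + 1) = 0 :=
    LinearMap.ext fun x => Subtype.ext (LinearMap.congr_fun (hcomp (i + 1 + 1)) x)
  obtain ⟨h, hh⟩ := hext Q ((IsProjective.iff_projective _).2 ‹_›) (i + 1 + 1)
    (g.hom ∘ₗ b (i + 1)) (by rw [LinearMap.comp_assoc, hbf, LinearMap.comp_zero])
  have := (hses (i + 1)).epi
  refine ⟨ModuleCat.ofHom h, (cancel_epi (ModuleCat.ofHom (b (i + 1)))).1 ?_⟩
  exact ModuleCat.hom_ext hh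

lemma IsGorensteinProjectiveObj.isGorensteinProjective {M : ModuleCat.{u} R}
    (hM : IsGorensteinProjectiveObj M) : IsGorensteinProjective R M := by
  obtain ⟨K, P, a, b, rfl, hK, hP, hab⟩ := hM.exists_int_chain (-1 + 1 + 1)
  have hker (i : ℤ) : LinearMap.ker (b (i + 1) ≫ a i).hom = LinearMap.range (a (i + 1)).hom := by
    rw [ModuleCat.hom_comp, LinearMap.ker_comp_of_ker_eq_bot _
      (LinearMap.ker_eq_bot.2 (hab i).injective), (hab (i + 1)).range_eq_ker]
  have hrange (i : ℤ) :
      LinearMap.range (b (i + 1) ≫ a i).hom = LinearMap.range (a i).hom := by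
    rw [ModuleCat.hom_comp, LinearMap.range_comp_of_range_eq_top _
      (LinearMap.range_eq_top.2 (hab (i + 1)).surjective)]
  have hexact (i : ℤ) := (hrange (i + 1)).trans (hker i).symm
  refine ⟨P, fun i => (b (i + 1) ≫ a i).hom, fun i => (IsProjective.iff_projective _).2 (hP i),
    fun i => LinearMap.range_le_ker_iff.1 (hexact i).le, hexact, fun Q hQ i g hg => ?_,
    ⟨(LinearEquiv.ofInjective _ (hab (-1 + 1)).injective).trans (.ofEq _ _ (hker (-1)).symm)⟩⟩
  have := (IsProjective.iff_projective Q).1 hQ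
  have := (hab (i + 1 + 1)).epi
  have hag : a (i + 1) ≫ ModuleCat.ofHom g = 0 := by
    rw [← cancel_epi (b (i + 1 + 1)), Limits.comp_zero, ← Category.assoc]
    exact ModuleCat.hom_ext hg
  obtain ⟨l, hl⟩ := (hab (i + 1)).exists_desc (ModuleCat.ofHom g) hag
  obtain ⟨h, rfl⟩ := (hab i).exists_extension ((hK i).projExtVanishAbove Q 1 one_pos) l
  exact ⟨h.hom, by rw [← ModuleCat.hom_comp, Category.assoc, hl]; rfl⟩

theorem isGorensteinProjective_iff {M : ModuleCat.{u} R} :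
    IsGorensteinProjective R M ↔ IsGorensteinProjectiveObj M :=
  ⟨IsGorensteinProjective.isGorensteinProjectiveObj,
    IsGorensteinProjectiveObj.isGorensteinProjective⟩

end Modules

section ExtGroups

open CategoryTheory Limits Abelian

lemma subsingleton_ext_succ_iff {C : Type u'} [Category.{v} C] [Abelian C] [HasExt.{w} C]
    {X Y : C} (S : ProjectiveResolution X) (n : ℕ) :
    Subsingleton (Ext X Y (n + 1)) ↔
      ∀ g : S.complex.X (n + 1) ⟶ Y, S.complex.d (n + 2) (n + 1) ≫ g = 0 →
        ∃ h : S.complex.X n ⟶ Y, S.complex.d (n + 1) n ≫ h = g := by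
  refine ⟨fun hsub g hg => ?_, fun hex => subsingleton_of_forall_eq 0 fun e => ?_⟩
  · exact (S.extMk_eq_zero_iff g (n + 2) rfl hg n rfl).1 (hsub.elim _ _)
  · obtain ⟨g, hg, rfl⟩ := S.extMk_surjective e (n + 2) rfl
    exact (S.extMk_eq_zero_iff g (n + 2) rfl hg n rfl).2 (hex g hg)

namespace ProjectiveRes

variable {M : ModuleCat.{u} R}

/-- The chain complex underlying an augmented projective resolution. -/
noncomputable def chainComplex (res : ProjectiveRes R M) : ChainComplex (ModuleCat.{u} R) ℕ :=
  .of res.P (fun i => ModuleCat.ofHom (res.d i)) fun i =>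
    ModuleCat.hom_ext <| LinearMap.range_le_ker_iff.1 (res.exact_succ i).le

lemma chainComplex_d (res : ProjectiveRes R M) (i : ℕ) :
    res.chainComplex.d (i + 1) i = ModuleCat.ofHom (res.d i) :=
  ChainComplex.of_d res.P (fun i => ModuleCat.ofHom (res.d i)) i

/-- An augmented projective resolution as a `CategoryTheory.ProjectiveResolution`. -/
noncomputable def toProjectiveResolution (res : ProjectiveRes R M) :
    ProjectiveResolution M where
  complex := res.chainComplex
  projective i := (IsProjective.iff_projective (res.P i)).1 (res.projective i)
  π := (ChainComplex.toSingle₀Equiv _ _).symm ⟨ModuleCat.ofHom res.ε, by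
    rw [chainComplex_d]
    exact ModuleCat.hom_ext <| LinearMap.range_le_ker_iff.1 res.exact_zero.le⟩
  quasiIso := ⟨fun n => by
    cases n with
    | zero =>
      rw [ChainComplex.quasiIsoAt₀_iff, ShortComplex.quasiIso_iff_of_zeros' _ rfl rfl rfl]
      refine ⟨.moduleCat_of_range_eq_ker _ _ ?_, (ModuleCat.epi_iff_surjective _).2 res.surj⟩
      exact (congrArg (fun f => LinearMap.range f.hom) (res.chainComplex_d 0)).trans
        res.exact_zero
    | succ n =>
      rw [quasiIsoAt_iff_exactAt' _ _ (ChainComplex.exactAt_succ_single_obj _ _),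
        HomologicalComplex.exactAt_iff' _ (n + 1 + 1) (n + 1) n (by simp) (by simp)]
      refine .moduleCat_of_range_eq_ker _ _ ?_
      rw [chainComplex_d, chainComplex_d]
      exact res.exact_succ n⟩

/-- A `CategoryTheory.ProjectiveResolution` of a module as an augmented projective resolution. -/
noncomputable def ofProjectiveResolution (S : ProjectiveResolution M) : ProjectiveRes R M where
  P := S.complex.X
  d i := (S.complex.d (i + 1) i).hom
  ε := (S.π.f 0).hom
  projective i := (IsProjective.iff_projective _).2 (S.projective i)
  surj := (ModuleCat.epi_iff_surjective (S.π.f 0)).1 inferInstance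
  exact_zero := (ShortComplex.exact_of_g_is_cokernel (.mk _ _ S.complex_d_comp_π_f_zero)
    S.isColimitCokernelCofork).moduleCat_range_eq_ker
  exact_succ i := (S.exact_succ i).moduleCat_range_eq_ker

end ProjectiveRes

theorem extSuccVanishes_iff {M N : ModuleCat.{u} R} {j : ℕ} :
    ExtSuccVanishes R M N j ↔ Subsingleton (Ext M N (j + 1)) := by
  refine ⟨fun h => ?_, fun h res g hg => ?_⟩
  · refine (subsingleton_ext_succ_iff (ProjectiveResolution.of M) j).2 fun g hg => ?_
    obtain ⟨k, hk⟩ := h (.ofProjectiveResolution (.of M)) g.hom (congrArg ModuleCat.Hom.hom hg)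
    exact ⟨ModuleCat.ofHom k, ModuleCat.hom_ext hk⟩
  · have hg' : res.chainComplex.d (j + 2) (j + 1) ≫ ModuleCat.ofHom g = 0 := by
      rw [res.chainComplex_d (j + 1)]
      exact ModuleCat.hom_ext hg
    obtain ⟨k, hk⟩ := (subsingleton_ext_succ_iff res.toProjectiveResolution j).1 h
      (ModuleCat.ofHom g) hg'
    exact ⟨k.hom, congrArg ModuleCat.Hom.hom <|
      (congrArg (· ≫ k) (res.chainComplex_d j)).symm.trans hk⟩

end ExtGroups

section GorensteinProjectiveDimension

open CategoryTheory Abelian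

variable {M : ModuleCat.{u} R} {m n : ℕ}

theorem projExtVanishAbove_iff :
    ProjExtVanishAbove n M ↔
      ∀ P : ModuleCat.{u} R, Module.Projective R P → ∀ j, ExtSuccVanishes R M P (n + j) := by
  refine ⟨fun h P hP j => ?_, fun h P hP k hk => ?_⟩
  · have := (IsProjective.iff_projective P).1 hP
    exact extSuccVanishes_iff.2 (h P (n + j + 1) (by lia))
  · obtain ⟨j, rfl⟩ := Nat.exists_eq_add_of_lt hk
    exact extSuccVanishes_iff.1 (h P ((IsProjective.iff_projective P).2 hP) j)

namespace GPdimLE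

lemma succ (h : GPdimLE R n M) : GPdimLE R (n + 1) M := by
  induction n generalizing M with
  | zero =>
    have : Projective (ModuleCat.of R (LinearMap.ker (LinearMap.id : M →ₗ[R] M))) := by
      rw [LinearMap.ker_id]
      exact (IsProjective.iff_projective _).1 inferInstance
    exact ⟨M, .id, Function.surjective_id, h, isGorensteinProjective_iff.2 (.of_projective _)⟩
  | succ n ih =>
    obtain ⟨G, f, hf, hG, hker⟩ := h
    exact ⟨G, f, hf, hG, ih hker⟩

lemma projExtVanishAbove (h : GPdimLE R n M) : ProjExtVanishAbove n M := by
  induction n generalizing M with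
  | zero => exact (isGorensteinProjective_iff.1 h).projExtVanishAbove
  | succ n ih =>
    obtain ⟨G, f, hf, hG, hker⟩ := h
    exact .right (isShortExact_ofHom_ker_subtype hf) (ih hker)
      ((isGorensteinProjective_iff.1 hG).projExtVanishAbove.mono (Nat.zero_le _))

lemma isGorensteinProjectiveObj (h : GPdimLE R m M) (hM : ProjExtVanishAbove 0 M) :
    IsGorensteinProjectiveObj M := by
  induction m generalizing M with
  | zero => exact isGorensteinProjective_iff.1 h
  | succ m ih =>
    obtain ⟨G, f, hf, hG, hker⟩ := h
    have hses := isShortExact_ofHom_ker_subtype hf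
    have hG := isGorensteinProjective_iff.1 hG
    exact .right hses (ih hker (.left hses hG.projExtVanishAbove (hM.mono zero_le_one))) hG hM

lemma of_projExtVanishAbove (h : GPdimLE R m M) (hM : ProjExtVanishAbove n M) :
    GPdimLE R n M := by
  induction n generalizing m M with
  | zero => exact isGorensteinProjective_iff.2 (h.isGorensteinProjectiveObj hM)
  | succ n ih =>
    obtain ⟨G, f, hf, hG, hker⟩ := h.succ
    refine ⟨G, f, hf, hG, ih hker (.left (isShortExact_ofHom_ker_subtype hf) ?_ hM)⟩
    exact (isGorensteinProjective_iff.1 hG).projExtVanishAbove.mono (Nat.zero_le n)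

end GPdimLE

lemma exists_gpdimLE_of_gpdim_ne_top (h : GPdim R M ≠ ⊤) :
    ∃ n : ℕ, GPdim R M = n ∧ GPdimLE R n M := by
  refine csInf_mem (s := {k : ℕ∞ | ∃ n : ℕ, k = n ∧ GPdimLE R n M})
    (Set.nonempty_iff_ne_empty.2 fun hempty => h ?_)
  rw [GPdim, hempty, sInf_empty]

theorem gpdim_le_of_projExtVanishAbove (h : GPdim R M ≠ ⊤) (hM : ProjExtVanishAbove n M) :
    GPdim R M ≤ n :=
  let ⟨_, _, hm⟩ := exists_gpdimLE_of_gpdim_ne_top h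
  sInf_le ⟨n, rfl, hm.of_projExtVanishAbove hM⟩

theorem projExtVanishAbove_of_gpdim_eq (h : GPdim R M = n) : ProjExtVanishAbove n M := by
  obtain ⟨m, hm, hM⟩ := exists_gpdimLE_of_gpdim_ne_top (h ▸ ENat.natCast_ne_top n)
  obtain rfl : m = n := ENat.natCast_inj.1 (hm.symm.trans h)
  exact hM.projExtVanishAbove

end GorensteinProjectiveDimension

section Adjunctions

open CategoryTheory Limits Abelian

variable {C : Type u'} [Category.{v} C] [Abelian C] {D : Type*} [Category* D] [Abelian D]
  {F : C ⥤ D} {G : D ⥤ C}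

lemma IsShortExact.map [F.PreservesZeroMorphisms] [F.PreservesMonomorphisms]
    [PreservesFiniteColimits F] {X Y Z : C} {i : X ⟶ Y} {p : Y ⟶ Z} (h : IsShortExact i p) :
    IsShortExact (F.map i) (F.map p) :=
  have := h.mono
  have := h.epi
  isShortExact_of_mono_of_isColimit
    (w := by rw [← F.map_comp, h.comp_eq_zero, F.map_zero])
    (CokernelCofork.mapIsColimit _ h.2.gIsCokernel F)

variable [EnoughProjectives C] [HasExt.{w} C] [HasExt.{w} D]
  [F.PreservesMonomorphisms] [F.PreservesProjectiveObjects]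

lemma subsingleton_ext_succ_of_adj (adj : F ⊣ G) {X : C} {N : D} {n : ℕ}
    (h : Subsingleton (Ext (F.obj X) N (n + 1))) : Subsingleton (Ext X (G.obj N) (n + 1)) := by
  have := adj.isLeftAdjoint
  have := adj.leftAdjoint_preservesColimits
  induction n generalizing X with
  | zero =>
    have hX := isShortExact_kernel_ι (Projective.π X)
    refine hX.subsingleton_ext_one fun g => ?_
    obtain ⟨f, hf⟩ := (hX.map (F := F)).exists_extension h ((adj.homEquiv _ _).symm g)
    refine ⟨adj.homEquiv _ _ f, ?_⟩
    rw [← adj.homEquiv_naturality_left, hf, Equiv.apply_symm_apply]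
  | succ n ih =>
    have hX := isShortExact_kernel_ι (Projective.π X)
    refine hX.subsingleton_ext_right (ih ?_)
      (HasProjectiveDimensionLT.subsingleton _ 1 _ (by lia) _)
    exact hX.map.subsingleton_ext_left
      (HasProjectiveDimensionLT.subsingleton _ 1 _ (by lia) _) h

theorem ProjExtVanishAbove.of_adj (adj : F ⊣ G)
    (hG : ∀ (Q : C) [Projective Q], ∃ (N : D) (f : G.obj N ⟶ Q), Projective N ∧ Epi f)
    {X : C} {n : ℕ} (hX : ProjExtVanishAbove n (F.obj X)) : ProjExtVanishAbove n X := by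
  intro Q _ k hk
  obtain ⟨k, rfl⟩ := Nat.exists_eq_add_one.2 (Nat.zero_lt_of_lt hk)
  obtain ⟨N, f, hN, hf⟩ := hG Q
  obtain ⟨s, hs⟩ := Projective.factors (𝟙 Q) f
  have hsub := subsingleton_ext_succ_of_adj adj (hX N (k + 1) hk)
  refine subsingleton_of_forall_eq 0 fun e => ?_
  rw [← e.comp_mk₀_id, ← hs, ← Ext.mk₀_comp_mk₀, ← Ext.comp_assoc_of_third_deg_zero,
    hsub.elim (e.comp _ _) 0, Ext.zero_comp]

end Adjunctions

section FrobeniusExtensions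

open CategoryTheory

variable {ι : R →+* A}

lemma preservesProjectiveObjects_restrictScalars
    (h : Module.Projective R ((ModuleCat.restrictScalars ι).obj (ModuleCat.of A A))) :
    (ModuleCat.restrictScalars.{u} ι).PreservesProjectiveObjects := by
  have : (ModuleCat.coextendScalars.{u, u, u} ι).PreservesEpimorphisms := by
    refine ⟨fun {N N'} f hf => (ModuleCat.epi_iff_surjective _).2 fun φ => ?_⟩
    obtain ⟨ψ, hψ⟩ := Module.projective_lifting_property f.hom
      (ModuleCat.CoextendScalars.equiv ι N' φ) ((ModuleCat.epi_iff_surjective f).1 hf)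
    exact ⟨(ModuleCat.CoextendScalars.equiv ι N).symm ψ, ModuleCat.CoextendScalars.ext hψ⟩
  exact Functor.preservesProjectiveObjects_of_adjunction_of_preservesEpimorphisms
    (ModuleCat.restrictCoextendScalarsAdj ι)

lemma IsFrobeniusExtension.preservesProjectiveObjects (h : IsFrobeniusExtension ι) :
    (ModuleCat.restrictScalars.{u} ι).PreservesProjectiveObjects := by
  obtain ⟨-, τ, n, x, y, hτ, -, -, hy⟩ := h
  let := Module.compHom A ι
  let coord : A →ₗ[R] Fin n → R :=
    LinearMap.pi fun i =>
      { toFun a := τ (a * x i)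
        map_add' a b := by rw [add_mul, map_add]
        map_smul' r a := (congrArg τ (mul_assoc (ι r) a (x i))).trans (hτ r _) }
  exact preservesProjectiveObjects_restrictScalars <|
    Module.Projective.of_split coord (Fintype.linearCombination R y) (LinearMap.ext hy)

/-- The coinduced module `Hom_R(A, Q)` of an `A`-module `Q`, with its elements regarded as additive
maps `A → Q` so that multiplication in `A` and scalars from `A` on `Q` can be used. -/
noncomputable def coinducedEval (ι : R →+* A) (Q : ModuleCat.{u} A) :
    (ModuleCat.coextendScalars ι).obj ((ModuleCat.restrictScalars ι).obj Q) →+ A →+ Q where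
  toFun φ := (ModuleCat.CoextendScalars.equiv ι _ φ).toAddMonoidHom
  map_zero' := rfl
  map_add' _ _ := rfl

section

variable {Q : ModuleCat.{u} A}
  (φ : (ModuleCat.coextendScalars ι).obj ((ModuleCat.restrictScalars ι).obj Q))

lemma coinducedEval_map_mul (r : R) (a : A) :
    coinducedEval ι Q φ (ι r * a) = ι r • coinducedEval ι Q φ a :=
  (ModuleCat.CoextendScalars.equiv ι _ φ).map_smul r a

lemma coinducedEval_smul (a b : A) :
    coinducedEval ι Q (a • φ) b = coinducedEval ι Q φ (b * a) :=
  rfl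

lemma exists_coinducedEval_eq (f : A →+ Q) (hf : ∀ r a, f (ι r * a) = ι r • f a) :
    ∃ φ, coinducedEval ι Q φ = f :=
  ⟨(ModuleCat.CoextendScalars.equiv ι _).symm { f with map_smul' := hf }, rfl⟩

end

lemma IsFrobeniusExtension.exists_epi_coextendScalars (h : IsFrobeniusExtension ι)
    (Q : ModuleCat.{u} A) [Projective Q] :
    ∃ (N : ModuleCat.{u} R) (f : (ModuleCat.coextendScalars ι).obj N ⟶ Q),
      Projective N ∧ Epi f := by
  have := h.preservesProjectiveObjects
  obtain ⟨-, τ, n, x, y, hτ, -, hx, hy⟩ := h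
  let f : (ModuleCat.coextendScalars ι).obj ((ModuleCat.restrictScalars ι).obj Q) →ₗ[A] Q :=
    { toFun φ := ∑ i, x i • coinducedEval ι Q φ (y i)
      map_add' φ ψ := by
        simp only [map_add, AddMonoidHom.add_apply, smul_add, Finset.sum_add_distrib]
      map_smul' a φ := by
        -- Expand `y i * a` in the `y k`, then resum `x i` against its coefficients to `a * x k`.
        have hexpand i : coinducedEval ι Q (a • φ) (y i) =
            ∑ k, ι (τ (y i * (a * x k))) • coinducedEval ι Q φ (y k) := by
          rw [coinducedEval_smul, ← hy (y i * a), map_sum]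
          simp only [coinducedEval_map_mul, mul_assoc]
        simp only [hexpand, Finset.smul_sum, RingHom.id_apply, smul_smul]
        rw [Finset.sum_comm]
        simp only [← Finset.sum_smul, hx] }
  refine ⟨_, ModuleCat.ofHom f, Functor.projective_obj (ModuleCat.restrictScalars ι) Q,
    (ModuleCat.epi_iff_surjective _).2 fun q => ?_⟩
  let g : A →+ Q := ((smulAddHom A Q).flip q).comp (ι.toAddMonoidHom.comp τ)
  obtain ⟨φ, hφ⟩ := exists_coinducedEval_eq (ι := ι) g fun r a => by
    simp [g, hτ, mul_smul]
  refine ⟨φ, ?_⟩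
  calc ∑ i, x i • coinducedEval ι Q φ (y i) = ∑ i, x i • ι (τ (y i)) • q := by rw [hφ]; rfl
    _ = (∑ i, x i * ι (τ (y i * 1))) • q := by simp only [smul_smul, Finset.sum_smul, mul_one]
    _ = q := by rw [hx, one_smul]

end FrobeniusExtensions

section ChangeOfRings

open CategoryTheory

theorem stmt16_general (ι : R →+* A)
    [(ModuleCat.restrictScalars.{u} ι).PreservesProjectiveObjects]
    (hι : ∀ (Q : ModuleCat.{u} A) [Projective Q],
      ∃ (N : ModuleCat.{u} R) (f : (ModuleCat.coextendScalars ι).obj N ⟶ Q), Projective N ∧ Epi f)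
    (M : ModuleCat.{u} A) :
    (∀ n : ℕ, GPdim A M ≠ ⊤ →
      (∀ P : ModuleCat.{u} A, Module.Projective A P → ∀ j : ℕ, ExtSuccVanishes A M P (n + j)) →
      GPdim A M ≤ n) ∧
    (∀ n : ℕ, GPdim R ((ModuleCat.restrictScalars ι).obj M) = n →
      (∀ P : ModuleCat.{u} A, Module.Projective A P → ∀ j : ℕ, ExtSuccVanishes A M P (n + j)) ∧
      (GPdim A M ≠ ⊤ → GPdim A M ≤ GPdim R ((ModuleCat.restrictScalars ι).obj M))) := by
  refine ⟨fun n hM h => gpdim_le_of_projExtVanishAbove hM (projExtVanishAbove_iff.2 h),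
    fun n hn => ?_⟩
  have hvanish : ProjExtVanishAbove n M :=
    .of_adj (ModuleCat.restrictCoextendScalarsAdj ι) hι (projExtVanishAbove_of_gpdim_eq hn)
  exact ⟨projExtVanishAbove_iff.1 hvanish,
    fun hM => hn ▸ gpdim_le_of_projExtVanishAbove hM hvanish⟩

end ChangeOfRings

theorem stmt16 (ι : R →+* A) (hF : IsFrobeniusExtension ι)
    (M : Type u) [AddCommGroup M] [Module A M] :
    (∀ n : ℕ, GPdim A (ModuleCat.of A M) ≠ ⊤ →
      (∀ P : ModuleCat.{u} A, Module.Projective A P →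
        ∀ j : ℕ, ExtSuccVanishes A (ModuleCat.of A M) P (n + j)) →
      GPdim A (ModuleCat.of A M) ≤ (n : ℕ∞)) ∧
    (∀ n : ℕ, GPdim A (ModuleCat.of A M) ≠ ⊤ →
      GPdim R (@ModuleCat.of R _ M _ (Module.compHom M ι)) = (n : ℕ∞) →
      (∀ P : ModuleCat.{u} A, Module.Projective A P →
        ∀ j : ℕ, ExtSuccVanishes A (ModuleCat.of A M) P (n + j)) ∧
      GPdim A (ModuleCat.of A M) ≤
        GPdim R (@ModuleCat.of R _ M _ (Module.compHom M ι))) := by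
  have := hF.preservesProjectiveObjects
  have h := stmt16_general ι (fun Q _ => hF.exists_epi_coextendScalars Q) (.of A M)
  exact ⟨h.1, fun n hM hn => (h.2 n hn).imp_right fun hle => hle hM⟩

end Statement
end
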